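/- arXiv:2402.04526 — 8 statements merged into one kernel-verified Lean document; each statement's English description precedes it below -/
import Mathlib

section
/- If e₁ ∈ E_L', e₂ ∈ E_R', and e₁ and e₂ share exactly one vertex v (that is, e₁ ∩ e₂ = {v}), then v ∈ X_i \ {v'}. -/
/-!
In a forest a walk that never immediately reverses an edge is a path. So if `a` and `b` lie in
different branches at `i`, the path from `a` to `i` followed by the path from `i` to `b` is again a
path: it enters `i` from `L` and leaves it towards `R ≠ L`. A vertex shared by the bags at `a` and
`b` therefore lies in the bag at `i`, hence also in the bag at `R`, which is on the path from `b`
to `i`; the latter bag does not contain `v'`.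
-/

section Forest

variable {I : Type*} {T : SimpleGraph I}

theorem isPath_append_of_penultimate_ne_snd (hT : T.IsAcyclic) {a i b : I} {p : T.Walk a i}
    {q : T.Walk i b} (hp : p.IsPath) (hq : q.IsPath) (hne : p.penultimate ≠ q.snd) :
    (p.append q).IsPath := by
  rw [hT.isPath_iff_isChain] at hp hq ⊢
  rw [SimpleGraph.Walk.edges_append]
  refine hp.append hq fun e he f hf hef => hne ?_
  have hedges : s(i, p.penultimate) = s(i, q.snd) := by
    rwa [← List.getLast_of_mem_getLast? he, ← List.head_of_mem_head? hf,
      SimpleGraph.Walk.getLast_edges_eq_mk_penultimate_end,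
      SimpleGraph.Walk.head_edges_eq_mk_start_snd, Sym2.eq_swap] at hef
  exact Sym2.congr_right.mp hedges

variable (T) in
/-- The branch of `T` at `i` through `L`: all nodes with a path to `i` passing through `L`. For a
neighbor `L` of `i` in a tree, this is the set `T_L`. -/
def branch (i L : I) : Set I :=
  {j | ∃ p : T.Path j i, L ∈ p.val.support}

theorem exists_path_mem_support_of_mem_branch (hT : T.IsAcyclic) {i L R a b : I}
    (hiL : T.Adj i L) (hiR : T.Adj i R) (hLR : L ≠ R)
    (ha : a ∈ branch T i L) (hb : b ∈ branch T i R) :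
    ∃ p : T.Path a b, i ∈ p.val.support := by
  obtain ⟨⟨p, hp⟩, hLp⟩ := ha
  obtain ⟨⟨q, hq⟩, hRq⟩ := hb
  have hL : L = p.penultimate := hT.eq_penultimate_of_adj_end hp hiL hLp
  have hR : R = q.reverse.snd :=
    (hT.eq_penultimate_of_adj_end hq hiR hRq).trans q.snd_reverse.symm
  have hpq : (p.append q.reverse).IsPath :=
    isPath_append_of_penultimate_ne_snd hT hp hq.reverse (hL ▸ hR ▸ hLR)
  exact ⟨⟨_, hpq⟩, (SimpleGraph.Walk.mem_support_append_iff _ _).mpr (.inl p.end_mem_support)⟩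

end Forest

theorem fact_intersecting_vertex_in_Xi_general {V I : Type*} {T : SimpleGraph I}
    (hT : T.IsAcyclic) {X : I → Set V}
    (hpath : ∀ i s j : I, (∃ p : T.Path i s, j ∈ p.val.support) → X i ∩ X s ⊆ X j)
    {i L R : I} (hiL : T.Adj i L) (hiR : T.Adj i R) (hLR : L ≠ R) {v' : V} (hv' : v' ∉ X R)
    {a b : I} (ha : a ∈ branch T i L) (hb : b ∈ branch T i R) :
    X a ∩ X b ⊆ X i \ {v'} := by
  obtain ⟨p, hi⟩ := exists_path_mem_support_of_mem_branch hT hiL hiR hLR ha hb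
  rintro v ⟨hva, hvb⟩
  have hvi : v ∈ X i := hpath a b i ⟨p, hi⟩ ⟨hva, hvb⟩
  have hvR : v ∈ X R := hpath b i R hb ⟨hvb, hvi⟩
  exact ⟨hvi, ne_of_mem_of_not_mem hvR hv'⟩

theorem fact_intersecting_vertex_in_Xi {V I : Type*}
    (G : SimpleGraph V) (T : SimpleGraph I) (hT : T.IsTree) (X : I → Set V)
    (hcover : ∀ v : V, ∃ i : I, v ∈ X i)
    (hedge : ∀ u v : V, G.Adj u v → ∃ i : I, u ∈ X i ∧ v ∈ X i)
    (hpath : ∀ i s j : I, (∃ p : T.Path i s, j ∈ p.val.support) → X i ∩ X s ⊆ X j)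
    (i L R : I) (hiL : T.Adj i L) (hiR : T.Adj i R) (hLR : L ≠ R)
    (rep : Sym2 V → I)
    (hrep : ∀ e ∈ G.edgeSet, ∀ v ∈ e, v ∈ X (rep e))
    (v' : V) (hv' : X i \ X R = {v'})
    (e₁ e₂ : Sym2 V) (he₁ : e₁ ∈ G.edgeSet) (he₂ : e₂ ∈ G.edgeSet)
    (he₁L : ∃ p : T.Path (rep e₁) i, L ∈ p.val.support)
    (he₂R : ∃ p : T.Path (rep e₂) i, R ∈ p.val.support)
    (v : V) (hv₁ : v ∈ e₁) (hv₂ : v ∈ e₂)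
    (honly : ∀ w : V, w ∈ e₁ → w ∈ e₂ → w = v) :
    v ∈ X i \ {v'} := by
  have hv'R : v' ∉ X R := (hv'.ge rfl).2
  exact fact_intersecting_vertex_in_Xi_general hT.isAcyclic hpath hiL hiR hLR hv'R he₁L he₂R
    ⟨hrep e₁ he₁ v hv₁, hrep e₂ he₂ v hv₂⟩
end

section
/- In the split setup, for every pair (c₁,c₂) ∈ C×C: A^(2) = (A_L^(2) ∪ A_R^(2) ∪ Ā^(2)) \ {v''}, where Ā^(2) = {v₀ : ∃v₁, (v₀,v₁) ∈ A_L^(9) and v₁ ∈ A_R^(6)} ∪ {v₀ : ∃v₁, (v₀,v₁) ∈ A_R^(9) and v₁ ∈ A_L^(6)}. -/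
variable {V C : Type*}

def N1 (X : Set V) (Es : Set (Sym2 V)) (f : Sym2 V → C) (c₁ c₂ : C) : Set V :=
  {v₀ | v₀ ∈ X ∧ ∃ v₁ v₂, s(v₀, v₁) ∈ Es ∧ s(v₁, v₂) ∈ Es ∧
    f s(v₀, v₁) = c₁ ∧ f s(v₁, v₂) = c₂}

def N2 (X : Set V) (Es : Set (Sym2 V)) (f : Sym2 V → C) (c₁ c₂ : C) : Set V :=
  {v₀ | v₀ ∈ X ∧ ∃ v₁ v₂, s(v₀, v₁) ∈ Es ∧ s(v₁, v₂) ∈ Es ∧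
    f s(v₀, v₁) = c₂ ∧ f s(v₁, v₂) = c₁}

def N3 (X : Set V) (Es : Set (Sym2 V)) (f : Sym2 V → C) (c₁ c₂ : C) : Set (V × V) :=
  {p | p.1 ∈ X ∧ p.2 ∈ X ∧ ∃ v₁, s(p.1, v₁) ∈ Es ∧ s(v₁, p.2) ∈ Es ∧
    f s(p.1, v₁) = c₁ ∧ f s(v₁, p.2) = c₂}

def N4 (X : Set V) (Es : Set (Sym2 V)) (f : Sym2 V → C) (c₁ c₂ : C) : Set V :=
  {v₀ | v₀ ∈ X ∧ ∃ v₁ v₂ v₃, s(v₀, v₁) ∈ Es ∧ s(v₁, v₂) ∈ Es ∧ s(v₂, v₃) ∈ Es ∧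
    f s(v₀, v₁) = c₁ ∧ f s(v₁, v₂) = c₂ ∧ f s(v₂, v₃) = c₁}

def N5 (X : Set V) (Es : Set (Sym2 V)) (f : Sym2 V → C) (c₁ c₂ : C) : Set V :=
  {v₀ | v₀ ∈ X ∧ ∃ v₁ v₂ v₃, s(v₀, v₁) ∈ Es ∧ s(v₁, v₂) ∈ Es ∧ s(v₂, v₃) ∈ Es ∧
    f s(v₀, v₁) = c₂ ∧ f s(v₁, v₂) = c₁ ∧ f s(v₂, v₃) = c₂}

def N6 (X : Set V) (Es : Set (Sym2 V)) (f : Sym2 V → C) (c₁ c₂ : C) : Set V :=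
  {v₀ | v₀ ∈ X ∧ ∃ v, s(v₀, v) ∈ Es ∧ f s(v₀, v) = c₁}

def N7 (X : Set V) (Es : Set (Sym2 V)) (f : Sym2 V → C) (c₁ c₂ : C) : Set V :=
  {v₀ | v₀ ∈ X ∧ ∃ v, s(v₀, v) ∈ Es ∧ f s(v₀, v) = c₂}

def N8 (X : Set V) (Es : Set (Sym2 V)) (f : Sym2 V → C) (c₁ c₂ : C) : Set (V × V) :=
  {p | p.1 ∈ X ∧ p.2 ∈ X ∧ s(p.1, p.2) ∈ Es ∧ f s(p.1, p.2) = c₁}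

def N9 (X : Set V) (Es : Set (Sym2 V)) (f : Sym2 V → C) (c₁ c₂ : C) : Set (V × V) :=
  {p | p.1 ∈ X ∧ p.2 ∈ X ∧ s(p.1, p.2) ∈ Es ∧ f s(p.1, p.2) = c₂}

/-!
Sort the two-edge walks `v₀v₁v₂` in `EL ∪ ER` by the sides on which their two edges lie. If both
edges lie on one side, the walk is seen by `N2` of that side. Otherwise `v₁` is incident to both
sides, so it lies in `Xi ∩ XR`, and the walk is visible as an edge from `N9` followed by a vertex
of `N6`. A walk whose first edge lies in `ER` is recorded with respect to `XR` rather than `Xi`;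
since vertices of `Xi` incident to `ER` lie in `XR`, removing `XR \ Xi` corrects exactly this.
-/

/-- The vertices incident to some edge of `E`; two edge sets can only interact in the intersection
of their supports. -/
def edgeSupport (E : Set (Sym2 V)) : Set V :=
  {v | ∃ e ∈ E, v ∈ e}

/-- The initial vertices of two-edge walks whose first edge lies in `E₁` and has color `a`, and
whose second edge lies in `E₂` and has color `b`. This is `N2` without the restriction to `X`, with
separate edge sets for the two steps and with the colors in the order in which they are met. -/
def walkStarts (E₁ E₂ : Set (Sym2 V)) (f : Sym2 V → C) (a b : C) : Set V :=
  {v₀ | ∃ v₁ v₂, s(v₀, v₁) ∈ E₁ ∧ s(v₁, v₂) ∈ E₂ ∧ f s(v₀, v₁) = a ∧ f s(v₁, v₂) = b}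

section EdgeSupport

variable {E : Set (Sym2 V)} {u v : V}

theorem left_mem_edgeSupport (h : s(u, v) ∈ E) : u ∈ edgeSupport E :=
  ⟨s(u, v), h, Sym2.mem_mk_left u v⟩

theorem right_mem_edgeSupport (h : s(u, v) ∈ E) : v ∈ edgeSupport E :=
  ⟨s(u, v), h, Sym2.mem_mk_right u v⟩

theorem inter_edgeSupport_subset_of_sdiff_subset_singleton {X Y : Set V}
    (hXY : X \ Y ⊆ {v}) (hE : ∀ e ∈ E, v ∉ e) :
    X ∩ edgeSupport E ⊆ Y := by
  rintro w ⟨hwX, e, he, hwe⟩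
  by_contra hwY
  obtain rfl : w = v := hXY ⟨hwX, hwY⟩
  exact hE e he hwe

end EdgeSupport

section WalkStarts

variable (E E₁ E₂ : Set (Sym2 V)) (f : Sym2 V → C) (a b : C)

theorem walkStarts_subset_edgeSupport : walkStarts E₁ E₂ f a b ⊆ edgeSupport E₁ :=
  fun _ ⟨_, _, h₁, _⟩ => left_mem_edgeSupport h₁

theorem walkStarts_union_left :
    walkStarts (E₁ ∪ E₂) E f a b = walkStarts E₁ E f a b ∪ walkStarts E₂ E f a b := by
  ext v₀
  simp only [walkStarts, Set.mem_union, Set.mem_ofPred_eq, or_and_right, exists_or]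

theorem walkStarts_union_right :
    walkStarts E (E₁ ∪ E₂) f a b = walkStarts E E₁ f a b ∪ walkStarts E E₂ f a b := by
  ext v₀
  simp only [walkStarts, Set.mem_union, Set.mem_ofPred_eq, or_and_right, and_or_left, exists_or]

theorem N2_eq_inter_walkStarts (X : Set V) (c₁ c₂ : C) :
    N2 X E f c₁ c₂ = X ∩ walkStarts E E f c₂ c₁ :=
  rfl

variable {E₁ E₂} in
theorem setOf_exists_N9_N6_eq_inter_walkStarts {X₁ X₂ : Set V}
    (hX : edgeSupport E₁ ∩ edgeSupport E₂ ⊆ X₁ ∩ X₂) (c₁ c₂ : C) :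
    {v₀ | ∃ v₁, (v₀, v₁) ∈ N9 X₁ E₁ f c₁ c₂ ∧ v₁ ∈ N6 X₂ E₂ f c₁ c₂} =
      X₁ ∩ walkStarts E₁ E₂ f c₂ c₁ := by
  ext v₀
  constructor
  · rintro ⟨v₁, ⟨hv₀, -, h₁, hf₁⟩, -, v₂, h₂, hf₂⟩
    exact ⟨hv₀, v₁, v₂, h₁, h₂, hf₁, hf₂⟩
  · rintro ⟨hv₀, v₁, v₂, h₁, h₂, hf₁, hf₂⟩
    obtain ⟨hv₁, hv₁'⟩ := hX ⟨right_mem_edgeSupport h₁, left_mem_edgeSupport h₂⟩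
    exact ⟨v₁, ⟨hv₀, hv₁, h₁, hf₁⟩, hv₁', v₂, h₂, hf₂⟩

end WalkStarts

section SetDifference

variable {α : Type*}

theorem inter_sdiff_sdiff_self (X Y S : Set α) : (X ∩ S) \ (Y \ X) = X ∩ S :=
  sdiff_eq_left.2 (Set.disjoint_sdiff_right.mono_left Set.inter_subset_left)

theorem inter_sdiff_sdiff_eq_inter {X Y S : Set α} (h : X ∩ S ⊆ Y) :
    (Y ∩ S) \ (Y \ X) = X ∩ S :=
  calc (Y ∩ S) \ (Y \ X) = Y ∩ (X ∩ S) := by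
        rw [Set.inter_sdiff_right_comm, Set.sdiff_sdiff_right_self, Set.inter_assoc]
    _ = X ∩ S := Set.inter_eq_right.2 h

end SetDifference

theorem recursion_N2_general {Xi XR : Set V} {EL ER : Set (Sym2 V)}
    (hER : Xi ∩ edgeSupport ER ⊆ XR) (hshare : edgeSupport EL ∩ edgeSupport ER ⊆ Xi)
    (f : Sym2 V → C) (c₁ c₂ : C) :
    N2 Xi (EL ∪ ER) f c₁ c₂ =
      (N2 Xi EL f c₁ c₂ ∪ N2 XR ER f c₁ c₂ ∪
        ({v₀ | ∃ v₁, (v₀, v₁) ∈ N9 Xi EL f c₁ c₂ ∧ v₁ ∈ N6 XR ER f c₁ c₂} ∪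
         {v₀ | ∃ v₁, (v₀, v₁) ∈ N9 XR ER f c₁ c₂ ∧ v₁ ∈ N6 Xi EL f c₁ c₂})) \ (XR \ Xi) := by
  have hLR : edgeSupport EL ∩ edgeSupport ER ⊆ Xi ∩ XR :=
    fun _ hv => ⟨hshare hv, hER ⟨hshare hv, hv.2⟩⟩
  have hRL : edgeSupport ER ∩ edgeSupport EL ⊆ XR ∩ Xi := by
    rwa [Set.inter_comm, Set.inter_comm XR]
  have hstarts (E : Set (Sym2 V)) : Xi ∩ walkStarts ER E f c₂ c₁ ⊆ XR :=
    (Set.inter_subset_inter_right Xi (walkStarts_subset_edgeSupport ER E f c₂ c₁)).trans hER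
  rw [setOf_exists_N9_N6_eq_inter_walkStarts f hLR, setOf_exists_N9_N6_eq_inter_walkStarts f hRL]
  simp only [N2_eq_inter_walkStarts, Set.union_sdiff_distrib, inter_sdiff_sdiff_self,
    inter_sdiff_sdiff_eq_inter (hstarts _), walkStarts_union_left, walkStarts_union_right,
    Set.inter_union_distrib_left]
  ac_rfl

theorem recursion_N2
    [Fintype V] [Fintype C] (G : SimpleGraph V)
    (Xi XL XR : Set V) (v' v'' : V)
    (hXL : XL = Xi)
    (hv' : Xi \ XR = {v'}) (hv'' : XR \ Xi = {v''})
    (EL ER : Set (Sym2 V)) (hELG : EL ⊆ G.edgeSet) (hERG : ER ⊆ G.edgeSet)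
    (hdisj : Disjoint EL ER)
    (hERv : ∀ e ∈ ER, v' ∉ e)
    (hELv : ∀ e ∈ EL, v'' ∉ e)
    (hshare : ∀ v : V, (∃ e ∈ EL, v ∈ e) → (∃ e ∈ ER, v ∈ e) → v ∈ Xi \ {v'})
    (f : Sym2 V → C) (c₁ c₂ : C) :
    N2 Xi (EL ∪ ER) f c₁ c₂ =
      (N2 XL EL f c₁ c₂ ∪ N2 XR ER f c₁ c₂ ∪
        ({v₀ | ∃ v₁, (v₀, v₁) ∈ N9 XL EL f c₁ c₂ ∧ v₁ ∈ N6 XR ER f c₁ c₂} ∪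
         {v₀ | ∃ v₁, (v₀, v₁) ∈ N9 XR ER f c₁ c₂ ∧ v₁ ∈ N6 XL EL f c₁ c₂})) \ {v''} := by
  subst hXL
  exact hv'' ▸ recursion_N2_general
    (inter_edgeSupport_subset_of_sdiff_subset_singleton hv'.subset hERv)
    (fun v hv => (hshare v hv.1 hv.2).1) f c₁ c₂
end

section
/- In the split setup, for every pair (c₁,c₂) ∈ C×C: A^(3) equals (A_L^(3) ∪ A_R^(3) ∪ Ā^(3)) with all pairs having v'' as a coordinate removed, where Ā^(3) = {(v₁,v₂) : ∃v₃, (v₁,v₃) ∈ A_L^(8) and (v₃,v₂) ∈ A_R^(9)} ∪ {(v₁,v₂) : ∃v₃, (v₁,v₃) ∈ A_R^(8) and (v₃,v₂) ∈ A_L^(9)}. -/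
variable {V C : Type*}

/-!
The pairs of vertices joined by an edge of a given color form a relation, and `N3` is the
composition of two such relations, restricted to `X`. Composition distributes over `EL ∪ ER`, which
gives four pieces. In a mixed piece the middle vertex is incident to both `EL` and `ER`, hence lies
in both boundary sets, so restricting the two factors to these sets loses nothing.
-/

section Relations

open scoped SetRel

variable {α β γ : Type*}

lemma setRel_union_comp (R₁ R₂ : SetRel α β) (S : SetRel β γ) :
    (R₁ ∪ R₂) ○ S = (R₁ ○ S) ∪ (R₂ ○ S) := by
  aesop

lemma setRel_comp_union (R : SetRel α β) (S₁ S₂ : SetRel β γ) :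
    R ○ (S₁ ∪ S₂) = (R ○ S₁) ∪ (R ○ S₂) := by
  aesop

lemma setRel_inter_prod_inter_prod {R : SetRel α β} {A P : Set α} {B Q : Set β}
    (hdom : R.dom ∩ A ⊆ P) (hcod : R.cod ∩ B ⊆ Q) :
    R ∩ P ×ˢ Q ∩ A ×ˢ B = R ∩ A ×ˢ B := by
  ext ⟨a, b⟩
  constructor
  · rintro ⟨⟨hab, -⟩, hAB⟩
    exact ⟨hab, hAB⟩
  · rintro ⟨hab, ha, hb⟩
    exact ⟨⟨hab, hdom ⟨⟨b, hab⟩, ha⟩, hcod ⟨⟨a, hab⟩, hb⟩⟩, ha, hb⟩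

lemma setRel_inter_prod_comp_inter_prod_inter_prod {R : SetRel α β} {S : SetRel β γ}
    {A P : Set α} {M N : Set β} {B Q : Set γ}
    (hmid : R.cod ∩ S.dom ⊆ M ∩ N) (hdom : R.dom ∩ A ⊆ P) (hcod : S.cod ∩ B ⊆ Q) :
    ((R ∩ P ×ˢ M) ○ (S ∩ N ×ˢ Q)) ∩ A ×ˢ B = (R ○ S) ∩ A ×ˢ B := by
  ext ⟨a, b⟩
  constructor
  · rintro ⟨⟨m, ⟨ham, -⟩, hmb, -⟩, hAB⟩
    exact ⟨⟨m, ham, hmb⟩, hAB⟩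
  · rintro ⟨⟨m, ham, hmb⟩, ha, hb⟩
    obtain ⟨hmM, hmN⟩ := hmid ⟨⟨a, ham⟩, ⟨b, hmb⟩⟩
    have haP : a ∈ P := hdom ⟨⟨m, ham⟩, ha⟩
    have hbQ : b ∈ Q := hcod ⟨⟨m, hmb⟩, hb⟩
    exact ⟨⟨m, ⟨ham, haP, hmM⟩, hmb, hmN, hbQ⟩, ha, hb⟩

lemma setRel_diff_eq_inter_prod {R : SetRel α α} {X Y : Set α}
    (hR : R ⊆ (X ∪ Y) ×ˢ (X ∪ Y)) :
    R \ {p | p.1 ∈ Y \ X ∨ p.2 ∈ Y \ X} = R ∩ X ×ˢ X := by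
  ext p
  have hp : p ∈ R → (p.1 ∈ X ∨ p.1 ∈ Y) ∧ (p.2 ∈ X ∨ p.2 ∈ Y) := fun h => hR h
  simp only [Set.mem_sdiff, Set.mem_inter_iff, Set.mem_prod, Set.mem_ofPred_eq]
  tauto

end Relations

section ColoredEdges

open scoped SetRel

/-- The vertices incident to some edge of `Es`; two edge sets interact only through the vertices
incident to both. -/
def incidentVertices (Es : Set (Sym2 V)) : Set V :=
  {v | ∃ e ∈ Es, v ∈ e}

/-- Adjacency through an edge of `Es` of color `c`, as a relation on vertices. The coloring `f` is
total, but only its values on `Es` matter. -/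
def colorRel (Es : Set (Sym2 V)) (f : Sym2 V → C) (c : C) : SetRel V V :=
  {p | s(p.1, p.2) ∈ Es ∧ f s(p.1, p.2) = c}

variable {X Y : Set V} {Es EL ER : Set (Sym2 V)} {f : Sym2 V → C} {c c₁ c₂ : C}

lemma incidentVertices_inter_subset_of_diff_subset_singleton {v : V}
    (hXY : X \ Y ⊆ {v}) (hEs : ∀ e ∈ Es, v ∉ e) : incidentVertices Es ∩ X ⊆ Y := by
  rintro w ⟨⟨e, he, hwe⟩, hwX⟩
  by_contra hwY
  obtain rfl : w = v := hXY ⟨hwX, hwY⟩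
  exact hEs e he hwe

lemma colorRel_union : colorRel (EL ∪ ER) f c = colorRel EL f c ∪ colorRel ER f c := by
  ext p
  exact or_and_right

lemma dom_colorRel_subset : (colorRel Es f c).dom ⊆ incidentVertices Es :=
  fun v ⟨w, hvw, _⟩ => ⟨s(v, w), hvw, Sym2.mem_mk_left v w⟩

lemma cod_colorRel_subset : (colorRel Es f c).cod ⊆ incidentVertices Es :=
  fun w ⟨v, hvw, _⟩ => ⟨s(v, w), hvw, Sym2.mem_mk_right v w⟩

lemma N3_eq_colorRel_comp_inter_prod :
    N3 X Es f c₁ c₂ = (colorRel Es f c₁ ○ colorRel Es f c₂) ∩ X ×ˢ X := by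
  ext ⟨a, b⟩
  constructor
  · rintro ⟨ha, hb, m, ham, hmb, hc₁, hc₂⟩
    exact ⟨⟨m, ⟨ham, hc₁⟩, hmb, hc₂⟩, ha, hb⟩
  · rintro ⟨⟨m, ⟨ham, hc₁⟩, hmb, hc₂⟩, ha, hb⟩
    exact ⟨ha, hb, m, ham, hmb, hc₁, hc₂⟩

lemma N8_eq_colorRel_inter_prod : N8 X Es f c₁ c₂ = colorRel Es f c₁ ∩ X ×ˢ X := by
  ext p
  exact and_assoc.symm.trans and_comm

lemma N9_eq_colorRel_inter_prod : N9 X Es f c₁ c₂ = colorRel Es f c₂ ∩ X ×ˢ X := by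
  ext p
  exact and_assoc.symm.trans and_comm

lemma N3_inter_prod (hY : incidentVertices Es ∩ X ⊆ Y) :
    N3 Y Es f c₁ c₂ ∩ X ×ˢ X = N3 X Es f c₁ c₂ := by
  simp only [N3_eq_colorRel_comp_inter_prod]
  apply setRel_inter_prod_inter_prod
  · rintro a ⟨⟨_, m, ham, _⟩, ha⟩
    exact hY ⟨dom_colorRel_subset ⟨m, ham⟩, ha⟩
  · rintro b ⟨⟨_, m, _, hmb⟩, hb⟩
    exact hY ⟨cod_colorRel_subset ⟨m, hmb⟩, hb⟩

lemma N8_comp_N9_inter_prod {P Q : Set V}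
    (hmid : incidentVertices EL ∩ incidentVertices ER ⊆ P ∩ Q)
    (hP : incidentVertices EL ∩ X ⊆ P) (hQ : incidentVertices ER ∩ X ⊆ Q) :
    (N8 P EL f c₁ c₂ ○ N9 Q ER f c₁ c₂) ∩ X ×ˢ X =
      (colorRel EL f c₁ ○ colorRel ER f c₂) ∩ X ×ˢ X := by
  rw [N8_eq_colorRel_inter_prod, N9_eq_colorRel_inter_prod]
  exact setRel_inter_prod_comp_inter_prod_inter_prod
    ((Set.inter_subset_inter cod_colorRel_subset dom_colorRel_subset).trans hmid)
    ((Set.inter_subset_inter_left X dom_colorRel_subset).trans hP)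
    ((Set.inter_subset_inter_left X cod_colorRel_subset).trans hQ)

lemma N3_union :
    N3 X (EL ∪ ER) f c₁ c₂ = N3 X EL f c₁ c₂ ∪ N3 X ER f c₁ c₂ ∪
      ((colorRel EL f c₁ ○ colorRel ER f c₂) ∩ X ×ˢ X ∪
        (colorRel ER f c₁ ○ colorRel EL f c₂) ∩ X ×ˢ X) := by
  simp only [N3_eq_colorRel_comp_inter_prod, colorRel_union, setRel_union_comp,
    setRel_comp_union, Set.union_inter_distrib_right]
  ext p
  simp only [Set.mem_union]
  tauto

lemma N3_union_N3_union_comp_subset_prod :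
    N3 X EL f c₁ c₂ ∪ N3 Y ER f c₁ c₂ ∪
        ((N8 X EL f c₁ c₂ ○ N9 Y ER f c₁ c₂) ∪ (N8 Y ER f c₁ c₂ ○ N9 X EL f c₁ c₂)) ⊆
      (X ∪ Y) ×ˢ (X ∪ Y) := by
  rintro ⟨a, b⟩ ((⟨ha, hb, -⟩ | ⟨ha, hb, -⟩) | (⟨_, ⟨ha, -⟩, -, hb, -⟩ | ⟨_, ⟨ha, -⟩, -, hb, -⟩))
  · exact ⟨.inl ha, .inl hb⟩
  · exact ⟨.inr ha, .inr hb⟩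
  · exact ⟨.inl ha, .inr hb⟩
  · exact ⟨.inr ha, .inl hb⟩

theorem recursion_N3_general
    (X Y : Set V) (EL ER : Set (Sym2 V))
    (hY : incidentVertices ER ∩ X ⊆ Y)
    (hshare : incidentVertices EL ∩ incidentVertices ER ⊆ X)
    (f : Sym2 V → C) (c₁ c₂ : C) :
    N3 X (EL ∪ ER) f c₁ c₂ =
      (N3 X EL f c₁ c₂ ∪ N3 Y ER f c₁ c₂ ∪
        ((N8 X EL f c₁ c₂ ○ N9 Y ER f c₁ c₂) ∪ (N8 Y ER f c₁ c₂ ○ N9 X EL f c₁ c₂))) \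
        {p | p.1 ∈ Y \ X ∨ p.2 ∈ Y \ X} := by
  have hmid : incidentVertices EL ∩ incidentVertices ER ⊆ X ∩ Y :=
    fun v hv => ⟨hshare hv, hY ⟨hv.2, hshare hv⟩⟩
  have hmid_swap : incidentVertices ER ∩ incidentVertices EL ⊆ Y ∩ X := by
    rwa [Set.inter_comm, Set.inter_comm Y]
  rw [setRel_diff_eq_inter_prod N3_union_N3_union_comp_subset_prod]
  simp only [Set.union_inter_distrib_right]
  rw [N3_inter_prod Set.inter_subset_right, N3_inter_prod hY,
    N8_comp_N9_inter_prod hmid Set.inter_subset_right hY,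
    N8_comp_N9_inter_prod hmid_swap hY Set.inter_subset_right, N3_union]

end ColoredEdges

theorem recursion_N3
    [Fintype V] [Fintype C] (G : SimpleGraph V)
    (Xi XL XR : Set V) (v' v'' : V)
    (hXL : XL = Xi)
    (hv' : Xi \ XR = {v'}) (hv'' : XR \ Xi = {v''})
    (EL ER : Set (Sym2 V)) (hELG : EL ⊆ G.edgeSet) (hERG : ER ⊆ G.edgeSet)
    (hdisj : Disjoint EL ER)
    (hERv : ∀ e ∈ ER, v' ∉ e)
    (hELv : ∀ e ∈ EL, v'' ∉ e)
    (hshare : ∀ v : V, (∃ e ∈ EL, v ∈ e) → (∃ e ∈ ER, v ∈ e) → v ∈ Xi \ {v'})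
    (f : Sym2 V → C) (c₁ c₂ : C) :
    N3 Xi (EL ∪ ER) f c₁ c₂ =
      (N3 XL EL f c₁ c₂ ∪ N3 XR ER f c₁ c₂ ∪
        ({p : V × V | ∃ v₃, (p.1, v₃) ∈ N8 XL EL f c₁ c₂ ∧ (v₃, p.2) ∈ N9 XR ER f c₁ c₂} ∪
         {p : V × V | ∃ v₃, (p.1, v₃) ∈ N8 XR ER f c₁ c₂ ∧ (v₃, p.2) ∈ N9 XL EL f c₁ c₂})) \ {p : V × V | p.1 = v'' ∨ p.2 = v''} := by
  subst hXL
  have hR := incidentVertices_inter_subset_of_diff_subset_singleton hv'.subset hERv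
  simpa only [hv'', SetRel.comp, Set.mem_singleton_iff] using
    recursion_N3_general XL XR EL ER hR (fun v hv => (hshare v hv.1 hv.2).1) f c₁ c₂
end

section
/- In the split setup, for every pair (c₁,c₂) ∈ C×C: A^(4) = (A_L^(4) ∪ A_R^(4) ∪ Ā^(4)) \ {v''}, where Ā^(4) = {v₀ : ∃v₁, (v₀,v₁) ∈ A_L^(3) and v₁ ∈ A_R^(6)} ∪ {v₀ : ∃v₁,v₂, (v₀,v₁) ∈ A_L^(8), (v₁,v₂) ∈ A_R^(9) and v₂ ∈ A_L^(6)} ∪ {v₀ : ∃v₁, (v₀,v₁) ∈ A_L^(8) and v₁ ∈ A_R^(2)} ∪ {v₀ : ∃v₁, (v₀,v₁) ∈ A_R^(3) and v₁ ∈ A_L^(6)} ∪ {v₀ : ∃v₁,v₂, (v₀,v₁) ∈ A_R^(8), (v₁,v₂) ∈ A_L^(9) and v₂ ∈ A_R^(6)} ∪ {v₀ : ∃v₁, (v₀,v₁) ∈ A_R^(8) and v₁ ∈ A_L^(2)}. -/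
variable {V C : Type*}

/-!
Sort the three-edge walks coloured `c₁, c₂, c₁` by which of `EL`, `ER` each edge comes from.
Whenever a walk changes sides, the vertex where it does so is an endpoint on both sides, hence
lies in both boundary sets `XL` and `XR`; so the walk can be cut there into pieces recorded by the
neighbour sets of the two sides. A walk starting in `XL` with an edge of `ER` starts in `XR` as
well, so requiring the start to lie in `XL` amounts to removing `XR \ XL` from the starts found
on the two sides.
-/

/-- The vertices incident to some edge of `E`. Intersecting these sets for the two sides of a split
gives the vertices at which a walk can change sides. -/
def endpoints (E : Set (Sym2 V)) : Set V :=
  {v | ∃ e ∈ E, v ∈ e}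

/-- The starting vertices of walks of length three with colours `c₁, c₂, c₁`, where the edge set
of each of the three steps is prescribed separately, so that walks can be sorted by the sides of the
split they use. Vertices may repeat along the walk, as in the sets `N4`. -/
def alternatingWalkStarts (E₁ E₂ E₃ : Set (Sym2 V)) (f : Sym2 V → C) (c₁ c₂ : C) : Set V :=
  {v₀ | ∃ v₁ v₂ v₃, s(v₀, v₁) ∈ E₁ ∧ s(v₁, v₂) ∈ E₂ ∧ s(v₂, v₃) ∈ E₃ ∧
    f s(v₀, v₁) = c₁ ∧ f s(v₁, v₂) = c₂ ∧ f s(v₂, v₃) = c₁}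

section

variable {X Y : Set V} {E F E₁ E₂ E₃ : Set (Sym2 V)} {f : Sym2 V → C} {c₁ c₂ : C}

theorem left_mem_endpoints {v w : V} (h : s(v, w) ∈ E) : v ∈ endpoints E :=
  ⟨_, h, Sym2.mem_mk_left v w⟩

theorem right_mem_endpoints {v w : V} (h : s(v, w) ∈ E) : w ∈ endpoints E :=
  ⟨_, h, Sym2.mem_mk_right v w⟩

theorem N4_eq_inter_alternatingWalkStarts :
    N4 X E f c₁ c₂ = X ∩ alternatingWalkStarts E E E f c₁ c₂ :=
  rfl

theorem alternatingWalkStarts_subset_endpoints :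
    alternatingWalkStarts E₁ E₂ E₃ f c₁ c₂ ⊆ endpoints E₁ :=
  fun _ ⟨_, _, _, h₁, _⟩ => left_mem_endpoints h₁

theorem alternatingWalkStarts_union_first :
    alternatingWalkStarts (E ∪ F) E₂ E₃ f c₁ c₂ =
      alternatingWalkStarts E E₂ E₃ f c₁ c₂ ∪ alternatingWalkStarts F E₂ E₃ f c₁ c₂ := by
  ext v₀
  simp only [alternatingWalkStarts, Set.mem_union, Set.mem_ofPred_eq, or_and_right, exists_or]

theorem alternatingWalkStarts_union_second :
    alternatingWalkStarts E₁ (E ∪ F) E₃ f c₁ c₂ =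
      alternatingWalkStarts E₁ E E₃ f c₁ c₂ ∪ alternatingWalkStarts E₁ F E₃ f c₁ c₂ := by
  ext v₀
  simp only [alternatingWalkStarts, Set.mem_union, Set.mem_ofPred_eq, or_and_right, and_or_left,
    exists_or]

theorem alternatingWalkStarts_union_third :
    alternatingWalkStarts E₁ E₂ (E ∪ F) f c₁ c₂ =
      alternatingWalkStarts E₁ E₂ E f c₁ c₂ ∪ alternatingWalkStarts E₁ E₂ F f c₁ c₂ := by
  ext v₀
  simp only [alternatingWalkStarts, Set.mem_union, Set.mem_ofPred_eq, or_and_right, and_or_left,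
    exists_or]

theorem inter_alternatingWalkStarts_eq_N3_N6 (h : endpoints E ∩ endpoints F ⊆ X ∩ Y) :
    X ∩ alternatingWalkStarts E E F f c₁ c₂ =
      {v₀ | ∃ v₁, (v₀, v₁) ∈ N3 X E f c₁ c₂ ∧ v₁ ∈ N6 Y F f c₁ c₂} := by
  ext v₀
  constructor
  · rintro ⟨hv₀, v₁, v₂, v₃, e₁, e₂, e₃, k₁, k₂, k₃⟩
    obtain ⟨hX, hY⟩ := h ⟨right_mem_endpoints e₂, left_mem_endpoints e₃⟩
    exact ⟨v₂, ⟨hv₀, hX, v₁, e₁, e₂, k₁, k₂⟩, hY, v₃, e₃, k₃⟩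
  · rintro ⟨v₂, ⟨hv₀, -, v₁, e₁, e₂, k₁, k₂⟩, -, v₃, e₃, k₃⟩
    exact ⟨hv₀, v₁, v₂, v₃, e₁, e₂, e₃, k₁, k₂, k₃⟩

theorem inter_alternatingWalkStarts_eq_N8_N9_N6 (h : endpoints E ∩ endpoints F ⊆ X ∩ Y) :
    X ∩ alternatingWalkStarts E F E f c₁ c₂ =
      {v₀ | ∃ v₁ v₂, (v₀, v₁) ∈ N8 X E f c₁ c₂ ∧ (v₁, v₂) ∈ N9 Y F f c₁ c₂ ∧
        v₂ ∈ N6 X E f c₁ c₂} := by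
  ext v₀
  constructor
  · rintro ⟨hv₀, v₁, v₂, v₃, e₁, e₂, e₃, k₁, k₂, k₃⟩
    obtain ⟨hX₁, hY₁⟩ := h ⟨right_mem_endpoints e₁, left_mem_endpoints e₂⟩
    obtain ⟨hX₂, hY₂⟩ := h ⟨left_mem_endpoints e₃, right_mem_endpoints e₂⟩
    exact ⟨v₁, v₂, ⟨hv₀, hX₁, e₁, k₁⟩, ⟨hY₁, hY₂, e₂, k₂⟩, hX₂, v₃, e₃, k₃⟩
  · rintro ⟨v₁, v₂, ⟨hv₀, -, e₁, k₁⟩, ⟨-, -, e₂, k₂⟩, -, v₃, e₃, k₃⟩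
    exact ⟨hv₀, v₁, v₂, v₃, e₁, e₂, e₃, k₁, k₂, k₃⟩

theorem inter_alternatingWalkStarts_eq_N8_N2 (h : endpoints E ∩ endpoints F ⊆ X ∩ Y) :
    X ∩ alternatingWalkStarts E F F f c₁ c₂ =
      {v₀ | ∃ v₁, (v₀, v₁) ∈ N8 X E f c₁ c₂ ∧ v₁ ∈ N2 Y F f c₁ c₂} := by
  ext v₀
  constructor
  · rintro ⟨hv₀, v₁, v₂, v₃, e₁, e₂, e₃, k₁, k₂, k₃⟩
    obtain ⟨hX, hY⟩ := h ⟨right_mem_endpoints e₁, left_mem_endpoints e₂⟩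
    exact ⟨v₁, ⟨hv₀, hX, e₁, k₁⟩, hY, v₂, v₃, e₂, e₃, k₂, k₃⟩
  · rintro ⟨v₁, ⟨hv₀, -, e₁, k₁⟩, -, v₂, v₃, e₂, e₃, k₂, k₃⟩
    exact ⟨hv₀, v₁, v₂, v₃, e₁, e₂, e₃, k₁, k₂, k₃⟩

theorem inter_alternatingWalkStarts_union (h : endpoints E ∩ endpoints F ⊆ X ∩ Y) :
    X ∩ alternatingWalkStarts E (E ∪ F) (E ∪ F) f c₁ c₂ =
      N4 X E f c₁ c₂ ∪
        ({v₀ | ∃ v₁, (v₀, v₁) ∈ N3 X E f c₁ c₂ ∧ v₁ ∈ N6 Y F f c₁ c₂} ∪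
         {v₀ | ∃ v₁ v₂, (v₀, v₁) ∈ N8 X E f c₁ c₂ ∧ (v₁, v₂) ∈ N9 Y F f c₁ c₂ ∧
           v₂ ∈ N6 X E f c₁ c₂} ∪
         {v₀ | ∃ v₁, (v₀, v₁) ∈ N8 X E f c₁ c₂ ∧ v₁ ∈ N2 Y F f c₁ c₂}) := by
  rw [alternatingWalkStarts_union_second, alternatingWalkStarts_union_third,
    alternatingWalkStarts_union_third]
  simp only [Set.inter_union_distrib_left]
  rw [← N4_eq_inter_alternatingWalkStarts, inter_alternatingWalkStarts_eq_N3_N6 h,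
    inter_alternatingWalkStarts_eq_N8_N9_N6 h,
    inter_alternatingWalkStarts_eq_N8_N2 h]
  ac_rfl

end

theorem inter_union_eq_union_inter_sdiff {α : Type*} {X Y P Q : Set α} (h : X ∩ Q ⊆ Y) :
    X ∩ (P ∪ Q) = (X ∩ P ∪ Y ∩ Q) \ (Y \ X) := by
  ext x
  have hx : x ∈ X ∧ x ∈ Q → x ∈ Y := @h x
  simp only [Set.mem_inter_iff, Set.mem_union, Set.mem_sdiff]
  tauto

theorem recursion_N4_general
    (XL XR : Set V) (EL ER : Set (Sym2 V))
    (hshare : endpoints EL ∩ endpoints ER ⊆ XL)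
    (hER : XL ∩ endpoints ER ⊆ XR)
    (f : Sym2 V → C) (c₁ c₂ : C) :
    N4 XL (EL ∪ ER) f c₁ c₂ =
      (N4 XL EL f c₁ c₂ ∪ N4 XR ER f c₁ c₂ ∪
        ({v₀ | ∃ v₁, (v₀, v₁) ∈ N3 XL EL f c₁ c₂ ∧ v₁ ∈ N6 XR ER f c₁ c₂} ∪
         {v₀ | ∃ v₁ v₂, (v₀, v₁) ∈ N8 XL EL f c₁ c₂ ∧ (v₁, v₂) ∈ N9 XR ER f c₁ c₂ ∧
           v₂ ∈ N6 XL EL f c₁ c₂} ∪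
         {v₀ | ∃ v₁, (v₀, v₁) ∈ N8 XL EL f c₁ c₂ ∧ v₁ ∈ N2 XR ER f c₁ c₂} ∪
         {v₀ | ∃ v₁, (v₀, v₁) ∈ N3 XR ER f c₁ c₂ ∧ v₁ ∈ N6 XL EL f c₁ c₂} ∪
         {v₀ | ∃ v₁ v₂, (v₀, v₁) ∈ N8 XR ER f c₁ c₂ ∧ (v₁, v₂) ∈ N9 XL EL f c₁ c₂ ∧
           v₂ ∈ N6 XR ER f c₁ c₂} ∪
         {v₀ | ∃ v₁, (v₀, v₁) ∈ N8 XR ER f c₁ c₂ ∧ v₁ ∈ N2 XL EL f c₁ c₂})) \ (XR \ XL) := by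
  have hLR : endpoints EL ∩ endpoints ER ⊆ XL ∩ XR :=
    fun v hv => ⟨hshare hv, hER ⟨hshare hv, hv.2⟩⟩
  have hRL : endpoints ER ∩ endpoints EL ⊆ XR ∩ XL := by
    rwa [Set.inter_comm, Set.inter_comm XR]
  have hstart : XL ∩ alternatingWalkStarts ER (EL ∪ ER) (EL ∪ ER) f c₁ c₂ ⊆ XR :=
    (Set.inter_subset_inter_right XL alternatingWalkStarts_subset_endpoints).trans hER
  rw [N4_eq_inter_alternatingWalkStarts, alternatingWalkStarts_union_first,
    inter_union_eq_union_inter_sdiff hstart, inter_alternatingWalkStarts_union hLR,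
    Set.union_comm EL ER, inter_alternatingWalkStarts_union hRL]
  congr 1
  ac_rfl

theorem recursion_N4
    [Fintype V] [Fintype C] (G : SimpleGraph V)
    (Xi XL XR : Set V) (v' v'' : V)
    (hXL : XL = Xi)
    (hv' : Xi \ XR = {v'}) (hv'' : XR \ Xi = {v''})
    (EL ER : Set (Sym2 V)) (hELG : EL ⊆ G.edgeSet) (hERG : ER ⊆ G.edgeSet)
    (hdisj : Disjoint EL ER)
    (hERv : ∀ e ∈ ER, v' ∉ e)
    (hELv : ∀ e ∈ EL, v'' ∉ e)
    (hshare : ∀ v : V, (∃ e ∈ EL, v ∈ e) → (∃ e ∈ ER, v ∈ e) → v ∈ Xi \ {v'})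
    (f : Sym2 V → C) (c₁ c₂ : C) :
    N4 Xi (EL ∪ ER) f c₁ c₂ =
      (N4 XL EL f c₁ c₂ ∪ N4 XR ER f c₁ c₂ ∪
        ({v₀ | ∃ v₁, (v₀, v₁) ∈ N3 XL EL f c₁ c₂ ∧ v₁ ∈ N6 XR ER f c₁ c₂} ∪
         {v₀ | ∃ v₁ v₂, (v₀, v₁) ∈ N8 XL EL f c₁ c₂ ∧ (v₁, v₂) ∈ N9 XR ER f c₁ c₂ ∧
           v₂ ∈ N6 XL EL f c₁ c₂} ∪
         {v₀ | ∃ v₁, (v₀, v₁) ∈ N8 XL EL f c₁ c₂ ∧ v₁ ∈ N2 XR ER f c₁ c₂} ∪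
         {v₀ | ∃ v₁, (v₀, v₁) ∈ N3 XR ER f c₁ c₂ ∧ v₁ ∈ N6 XL EL f c₁ c₂} ∪
         {v₀ | ∃ v₁ v₂, (v₀, v₁) ∈ N8 XR ER f c₁ c₂ ∧ (v₁, v₂) ∈ N9 XL EL f c₁ c₂ ∧
           v₂ ∈ N6 XR ER f c₁ c₂} ∪
         {v₀ | ∃ v₁, (v₀, v₁) ∈ N8 XR ER f c₁ c₂ ∧ v₁ ∈ N2 XL EL f c₁ c₂})) \ {v''} := by
  subst hXL
  have hER : XL ∩ endpoints ER ⊆ XR := fun v ⟨hv, e, he, hve⟩ =>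
    Set.sdiff_subset_comm.1 hv'.subset ⟨hv, fun h : v = v' => hERv e he (h ▸ hve)⟩
  exact hv'' ▸ recursion_N4_general XL XR EL ER (fun v hv => (hshare v hv.1 hv.2).1) hER f c₁ c₂
end

section
/- In the split setup, for every tuple (A^(j))_{1≤j≤9} ∈ S(X_i), the set CL_f((A^(j))_{1≤j≤9}) equals the union, taken over all tuples (A_L^(j))_{1≤j≤9} ∈ S(X_L) and (A_R^(j))_{1≤j≤9} ∈ S(X_R) satisfying A^(j) = (A_L^(j) ∪ A_R^(j) ∪ Ā^(j)) \ {v''} for all 1 ≤ j ≤ 9 (where Ā^(j) is built from the tuples (A_L^(j)) and (A_R^(j)) as in the definition below, and for j ∈ {3,8,9} subtracting {v''} means removing all pairs having v'' as a coordinate), of the sets CL_{f_L}((A_L^(j))_{1≤j≤9}) ∩ CL_{f_R}((A_R^(j))_{1≤j≤9}), where CL_{f_L} is the color class function of f_L on X_L and CL_{f_R} is the color class function of f_R on X_R. -/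
variable {V C : Type*}

/-- A 9-tuple `(A⁽¹⁾, …, A⁽⁹⁾)` as in the definition of `S(X)`. -/
structure Tuple9 (V : Type*) where
  A1 : Set V
  A2 : Set V
  A3 : Set (V × V)
  A4 : Set V
  A5 : Set V
  A6 : Set V
  A7 : Set V
  A8 : Set (V × V)
  A9 : Set (V × V)

/-- `S(X)`: the 9-tuples whose components are subsets of `X` resp. `X × X`. -/
def SX (X : Set V) : Set (Tuple9 V) :=
  {A | A.A1 ⊆ X ∧ A.A2 ⊆ X ∧ A.A3 ⊆ X ×ˢ X ∧ A.A4 ⊆ X ∧ A.A5 ⊆ X ∧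
    A.A6 ⊆ X ∧ A.A7 ⊆ X ∧ A.A8 ⊆ X ×ˢ X ∧ A.A9 ⊆ X ×ˢ X}

/-- The color class function `CL_f` of `f` on `X` (with edge set `Es`). -/
def CL (X : Set V) (Es : Set (Sym2 V)) (f : Sym2 V → C) (A : Tuple9 V) : Set (C × C) :=
  {p | A.A1 = N1 X Es f p.1 p.2 ∧ A.A2 = N2 X Es f p.1 p.2 ∧ A.A3 = N3 X Es f p.1 p.2 ∧
    A.A4 = N4 X Es f p.1 p.2 ∧ A.A5 = N5 X Es f p.1 p.2 ∧ A.A6 = N6 X Es f p.1 p.2 ∧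
    A.A7 = N7 X Es f p.1 p.2 ∧ A.A8 = N8 X Es f p.1 p.2 ∧ A.A9 = N9 X Es f p.1 p.2}

/-- Given tuples `A_L` and `A_R`, the tuple `A` with
`A⁽ʲ⁾ = (A_L⁽ʲ⁾ ∪ A_R⁽ʲ⁾ ∪ Ā⁽ʲ⁾) \ {v''}` for all `1 ≤ j ≤ 9`, where the `Ā⁽ʲ⁾` are as in
Eq. (3) of the paper and for the pair-components subtracting `{v''}` means removing all
pairs having `v''` as a coordinate. -/
def combine (v'' : V) (AL AR : Tuple9 V) : Tuple9 V where
  A1 := (AL.A1 ∪ AR.A1 ∪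
    ({v₀ | ∃ v₁, (v₀, v₁) ∈ AL.A8 ∧ v₁ ∈ AR.A7} ∪
     {v₀ | ∃ v₁, (v₀, v₁) ∈ AR.A8 ∧ v₁ ∈ AL.A7})) \ {v''}
  A2 := (AL.A2 ∪ AR.A2 ∪
    ({v₀ | ∃ v₁, (v₀, v₁) ∈ AL.A9 ∧ v₁ ∈ AR.A6} ∪
     {v₀ | ∃ v₁, (v₀, v₁) ∈ AR.A9 ∧ v₁ ∈ AL.A6})) \ {v''}
  A3 := (AL.A3 ∪ AR.A3 ∪
    ({p : V × V | ∃ v₃, (p.1, v₃) ∈ AL.A8 ∧ (v₃, p.2) ∈ AR.A9} ∪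
     {p : V × V | ∃ v₃, (p.1, v₃) ∈ AR.A8 ∧ (v₃, p.2) ∈ AL.A9})) \
    {p : V × V | p.1 = v'' ∨ p.2 = v''}
  A4 := (AL.A4 ∪ AR.A4 ∪
    ({v₀ | ∃ v₁, (v₀, v₁) ∈ AL.A3 ∧ v₁ ∈ AR.A6} ∪
     {v₀ | ∃ v₁ v₂, (v₀, v₁) ∈ AL.A8 ∧ (v₁, v₂) ∈ AR.A9 ∧ v₂ ∈ AL.A6} ∪
     {v₀ | ∃ v₁, (v₀, v₁) ∈ AL.A8 ∧ v₁ ∈ AR.A2} ∪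
     {v₀ | ∃ v₁, (v₀, v₁) ∈ AR.A3 ∧ v₁ ∈ AL.A6} ∪
     {v₀ | ∃ v₁ v₂, (v₀, v₁) ∈ AR.A8 ∧ (v₁, v₂) ∈ AL.A9 ∧ v₂ ∈ AR.A6} ∪
     {v₀ | ∃ v₁, (v₀, v₁) ∈ AR.A8 ∧ v₁ ∈ AL.A2})) \ {v''}
  A5 := (AL.A5 ∪ AR.A5 ∪
    ({v₀ | ∃ v₁, (v₁, v₀) ∈ AL.A3 ∧ v₁ ∈ AR.A7} ∪
     {v₀ | ∃ v₁ v₂, (v₀, v₁) ∈ AL.A9 ∧ (v₁, v₂) ∈ AR.A8 ∧ v₂ ∈ AL.A7} ∪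
     {v₀ | ∃ v₁, (v₀, v₁) ∈ AL.A9 ∧ v₁ ∈ AR.A1} ∪
     {v₀ | ∃ v₁, (v₁, v₀) ∈ AR.A3 ∧ v₁ ∈ AL.A7} ∪
     {v₀ | ∃ v₁ v₂, (v₀, v₁) ∈ AR.A9 ∧ (v₁, v₂) ∈ AL.A8 ∧ v₂ ∈ AR.A7} ∪
     {v₀ | ∃ v₁, (v₀, v₁) ∈ AR.A9 ∧ v₁ ∈ AL.A1})) \ {v''}
  A6 := (AL.A6 ∪ AR.A6 ∪ ∅) \ {v''}
  A7 := (AL.A7 ∪ AR.A7 ∪ ∅) \ {v''}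
  A8 := (AL.A8 ∪ AR.A8 ∪ ∅) \ {p : V × V | p.1 = v'' ∨ p.2 = v''}
  A9 := (AL.A9 ∪ AR.A9 ∪ ∅) \ {p : V × V | p.1 = v'' ∨ p.2 = v''}

/-!
A walk of length at most three whose edges lie in `EL ∪ ER` changes between `EL` and `ER` only at
vertices incident with both, and these all lie in the boundary `X`. Cutting the walk where it
changes sides gives pieces recorded by the neighbour sets of `EL` and of `ER` on `X`, which is the
recursion when both sides have boundary `X`. On the right the boundary is `XR` instead, but on the
vertices incident with `ER` the sets `XR \ {v''}` and `X` agree, and `v'' ∉ X` never occurs as a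
cutting vertex, so `v''` can be deleted from the right tuple beforehand.
-/

theorem mem_sdiff_singleton_iff_mem {X Y : Set V} {x y v : V} (hX : X \ Y = {x})
    (hY : Y \ X = {y}) (hv : v ≠ x) : v ∈ Y \ {y} ↔ v ∈ X := by
  have not_mem_sdiff_left : v ∉ X \ Y := hX ▸ hv
  rw [← hY, Set.mem_sdiff, Set.mem_sdiff]
  rw [Set.mem_sdiff] at not_mem_sdiff_left
  tauto

attribute [ext] Tuple9

namespace Tuple9

/-- The tuple obtained by exchanging the roles of the two colors; the third component, recording
the ends of a two-colored path, is reversed. -/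
def swap (A : Tuple9 V) : Tuple9 V where
  A1 := A.A2
  A2 := A.A1
  A3 := Prod.swap ⁻¹' A.A3
  A4 := A.A5
  A5 := A.A4
  A6 := A.A7
  A7 := A.A6
  A8 := A.A9
  A9 := A.A8

/-- The tuple with the vertex `w` removed: from the sets of pairs, every pair with `w` as a
coordinate is removed. -/
def delete (A : Tuple9 V) (w : V) : Tuple9 V where
  A1 := A.A1 \ {w}
  A2 := A.A2 \ {w}
  A3 := A.A3 \ {p | p.1 = w ∨ p.2 = w}
  A4 := A.A4 \ {w}
  A5 := A.A5 \ {w}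
  A6 := A.A6 \ {w}
  A7 := A.A7 \ {w}
  A8 := A.A8 \ {p | p.1 = w ∨ p.2 = w}
  A9 := A.A9 \ {p | p.1 = w ∨ p.2 = w}

end Tuple9

/-- The tuple `(N⁽¹⁾, …, N⁽⁹⁾)` of neighbour sets on `X` for the color pair `(c₁, c₂)`, so that
`CL` is the fibre of `neighbourTuple` over a given tuple. -/
def neighbourTuple (X : Set V) (E : Set (Sym2 V)) (f : Sym2 V → C) (c₁ c₂ : C) : Tuple9 V where
  A1 := N1 X E f c₁ c₂
  A2 := N2 X E f c₁ c₂
  A3 := N3 X E f c₁ c₂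
  A4 := N4 X E f c₁ c₂
  A5 := N5 X E f c₁ c₂
  A6 := N6 X E f c₁ c₂
  A7 := N7 X E f c₁ c₂
  A8 := N8 X E f c₁ c₂
  A9 := N9 X E f c₁ c₂

/-- The vertex set `X` separates the edge sets `E` and `F`: every vertex incident both with an
edge of `E` and with an edge of `F` lies in `X`. -/
def Separates (X : Set V) (E F : Set (Sym2 V)) : Prop :=
  ∀ v, (∃ e ∈ E, v ∈ e) → (∃ e ∈ F, v ∈ e) → v ∈ X

section NeighbourTuple

variable {X Y : Set V} {E : Set (Sym2 V)} {f : Sym2 V → C} {c₁ c₂ : C}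

theorem mem_CL_iff_eq_neighbourTuple {A : Tuple9 V} {p : C × C} :
    p ∈ CL X E f A ↔ A = neighbourTuple X E f p.1 p.2 := by
  rw [Tuple9.ext_iff]
  rfl

theorem neighbourTuple_mem_SX : neighbourTuple X E f c₁ c₂ ∈ SX X :=
  ⟨fun _ h => h.1, fun _ h => h.1, fun _ h => ⟨h.1, h.2.1⟩, fun _ h => h.1, fun _ h => h.1,
    fun _ h => h.1, fun _ h => h.1, fun _ h => ⟨h.1, h.2.1⟩, fun _ h => ⟨h.1, h.2.1⟩⟩

theorem swap_preimage_N3 : Prod.swap ⁻¹' N3 X E f c₁ c₂ = N3 X E f c₂ c₁ := by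
  ext ⟨u, v⟩
  simp only [N3, Set.mem_preimage, Prod.swap_prod_mk, Set.mem_ofPred_eq]
  grind [Sym2.eq_swap]

theorem neighbourTuple_swap :
    (neighbourTuple X E f c₁ c₂).swap = neighbourTuple X E f c₂ c₁ := by
  ext1
  case A3 => exact swap_preimage_N3
  all_goals rfl

theorem neighbourTuple_delete (w : V) :
    (neighbourTuple X E f c₁ c₂).delete w = neighbourTuple (X \ {w}) E f c₁ c₂ := by
  ext <;>
    simp only [Tuple9.delete, neighbourTuple, N1, N2, N3, N4, N5, N6, N7, N8, N9, Set.mem_sdiff,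
      Set.mem_ofPred_eq, Set.mem_singleton_iff] <;>
    tauto

theorem neighbourTuple_congr (h : ∀ e ∈ E, ∀ v ∈ e, (v ∈ X ↔ v ∈ Y)) :
    neighbourTuple X E f c₁ c₂ = neighbourTuple Y E f c₁ c₂ := by
  have left_end {u v : V} (huv : s(u, v) ∈ E) : u ∈ X ↔ u ∈ Y := h _ huv _ (Sym2.mem_mk_left u v)
  have right_end {u v : V} (huv : s(u, v) ∈ E) : v ∈ X ↔ v ∈ Y :=
    h _ huv _ (Sym2.mem_mk_right u v)
  ext <;> simp only [neighbourTuple, N1, N2, N3, N4, N5, N6, N7, N8, N9, Set.mem_ofPred_eq] <;>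
    grind

end NeighbourTuple

theorem combine_delete_right {X : Set V} {w : V} (hw : w ∉ X) {AL : Tuple9 V} (hAL : AL ∈ SX X)
    (AR : Tuple9 V) : combine w AL (AR.delete w) = combine w AL AR := by
  obtain ⟨h1, h2, h3, -, -, h6, h7, h8, h9⟩ := hAL
  have ne_of_mem {v : V} {S : Set V} (hS : S ⊆ X) (hv : v ∈ S) : v ≠ w :=
    fun hvw => hw (hvw ▸ hS hv)
  have ne_of_mem_prod {u v : V} {S : Set (V × V)} (hS : S ⊆ X ×ˢ X) (huv : (u, v) ∈ S) :
      u ≠ w ∧ v ≠ w :=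
    ⟨fun huw => hw (huw ▸ (hS huv).1), fun hvw => hw (hvw ▸ (hS huv).2)⟩
  ext <;>
    simp only [combine, Tuple9.delete, Set.mem_sdiff, Set.mem_union, Set.mem_ofPred_eq,
      Set.mem_singleton_iff, Set.union_empty] <;>
    grind

namespace Separates

variable {X : Set V} {E F : Set (Sym2 V)}

theorem symm (h : Separates X E F) : Separates X F E := fun v hF hE => h v hE hF

theorem mem_of_mk_mem (h : Separates X E F) {u v w : V} (huv : s(u, v) ∈ E) (hvw : s(v, w) ∈ F) :
    v ∈ X :=
  h v ⟨_, huv, Sym2.mem_mk_right u v⟩ ⟨_, hvw, Sym2.mem_mk_left v w⟩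

variable {w : V} {f : Sym2 V → C} {c₁ c₂ : C}

theorem combine_neighbourTuple_A1 (h : Separates X E F) (hw : w ∉ X) :
    (combine w (neighbourTuple X E f c₁ c₂) (neighbourTuple X F f c₁ c₂)).A1 =
      N1 X (E ∪ F) f c₁ c₂ := by
  ext v₀
  simp only [combine, neighbourTuple, N1, N7, N8, Set.mem_union, Set.mem_sdiff,
    Set.mem_ofPred_eq, Set.mem_singleton_iff]
  constructor
  · grind
  · rintro ⟨hv₀, v₁, v₂, hE₁ | hF₁, hE₂ | hF₂, hc₁, hc₂⟩
    · grind
    · have hv₁ : v₁ ∈ X := h.mem_of_mk_mem hE₁ hF₂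
      grind
    · have hv₁ : v₁ ∈ X := h.symm.mem_of_mk_mem hF₁ hE₂
      grind
    · grind

theorem combine_neighbourTuple_A3 (h : Separates X E F) (hw : w ∉ X) :
    (combine w (neighbourTuple X E f c₁ c₂) (neighbourTuple X F f c₁ c₂)).A3 =
      N3 X (E ∪ F) f c₁ c₂ := by
  ext ⟨v₀, v₂⟩
  simp only [combine, neighbourTuple, N3, N8, N9, Set.mem_union, Set.mem_sdiff,
    Set.mem_ofPred_eq]
  constructor
  · grind
  · rintro ⟨hv₀, hv₂, v₁, hE₁ | hF₁, hE₂ | hF₂, hc₁, hc₂⟩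
    · grind
    · have hv₁ : v₁ ∈ X := h.mem_of_mk_mem hE₁ hF₂
      grind
    · have hv₁ : v₁ ∈ X := h.symm.mem_of_mk_mem hF₁ hE₂
      grind
    · grind

theorem combine_neighbourTuple_A4 (h : Separates X E F) (hw : w ∉ X) :
    (combine w (neighbourTuple X E f c₁ c₂) (neighbourTuple X F f c₁ c₂)).A4 =
      N4 X (E ∪ F) f c₁ c₂ := by
  ext v₀
  simp only [combine, neighbourTuple, N2, N3, N4, N6, N8, N9, Set.mem_union, Set.mem_sdiff,
    Set.mem_ofPred_eq, Set.mem_singleton_iff]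
  constructor
  · grind
  · rintro ⟨hv₀, v₁, v₂, v₃, hE₁ | hF₁, hE₂ | hF₂, hE₃ | hF₃, hc₁, hc₂, hc₃⟩
    · grind
    · have hv₂ : v₂ ∈ X := h.mem_of_mk_mem hE₂ hF₃
      grind
    · have hv₁ : v₁ ∈ X := h.mem_of_mk_mem hE₁ hF₂
      have hv₂ : v₂ ∈ X := h.symm.mem_of_mk_mem hF₂ hE₃
      grind
    · have hv₁ : v₁ ∈ X := h.mem_of_mk_mem hE₁ hF₂
      grind
    · have hv₁ : v₁ ∈ X := h.symm.mem_of_mk_mem hF₁ hE₂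
      grind
    · have hv₁ : v₁ ∈ X := h.symm.mem_of_mk_mem hF₁ hE₂
      have hv₂ : v₂ ∈ X := h.mem_of_mk_mem hE₂ hF₃
      grind
    · have hv₂ : v₂ ∈ X := h.symm.mem_of_mk_mem hF₂ hE₃
      grind
    · grind

end Separates

section Combine

variable {X : Set V} {E F : Set (Sym2 V)} {w : V} {f : Sym2 V → C} {c₁ c₂ : C}

theorem combine_neighbourTuple_A6 (hw : w ∉ X) :
    (combine w (neighbourTuple X E f c₁ c₂) (neighbourTuple X F f c₁ c₂)).A6 =
      N6 X (E ∪ F) f c₁ c₂ := by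
  ext v
  simp only [combine, neighbourTuple, N6, Set.mem_union, Set.mem_sdiff, Set.union_empty,
    Set.mem_ofPred_eq, Set.mem_singleton_iff]
  grind

theorem combine_neighbourTuple_A8 (hw : w ∉ X) :
    (combine w (neighbourTuple X E f c₁ c₂) (neighbourTuple X F f c₁ c₂)).A8 =
      N8 X (E ∪ F) f c₁ c₂ := by
  ext ⟨u, v⟩
  simp only [combine, neighbourTuple, N8, Set.mem_union, Set.mem_sdiff, Set.union_empty,
    Set.mem_ofPred_eq]
  grind

theorem Separates.combine_neighbourTuple (h : Separates X E F) (hw : w ∉ X) :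
    combine w (neighbourTuple X E f c₁ c₂) (neighbourTuple X F f c₁ c₂) =
      neighbourTuple X (E ∪ F) f c₁ c₂ := by
  -- Exchanging the colors carries the components 1, 4, 6, 8 of `combine` to 2, 5, 7, 9,
  -- definitionally.
  have swap_colors :
      combine w (neighbourTuple X E f c₁ c₂).swap (neighbourTuple X F f c₁ c₂).swap =
        combine w (neighbourTuple X E f c₂ c₁) (neighbourTuple X F f c₂ c₁) := by
    rw [neighbourTuple_swap, neighbourTuple_swap]
  ext1
  case A1 => exact h.combine_neighbourTuple_A1 hw
  case A2 => exact (congrArg Tuple9.A1 swap_colors).trans (h.combine_neighbourTuple_A1 hw)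
  case A3 => exact h.combine_neighbourTuple_A3 hw
  case A4 => exact h.combine_neighbourTuple_A4 hw
  case A5 => exact (congrArg Tuple9.A4 swap_colors).trans (h.combine_neighbourTuple_A4 hw)
  case A6 => exact combine_neighbourTuple_A6 hw
  case A7 => exact (congrArg Tuple9.A6 swap_colors).trans (combine_neighbourTuple_A6 hw)
  case A8 => exact combine_neighbourTuple_A8 hw
  case A9 => exact (congrArg Tuple9.A8 swap_colors).trans (combine_neighbourTuple_A8 hw)

end Combine

theorem CL_recursion_general {X XR : Set V} {w : V} {EL ER : Set (Sym2 V)} (hw : w ∉ X)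
    (hXR : ∀ e ∈ ER, ∀ v ∈ e, (v ∈ XR \ {w} ↔ v ∈ X)) (hsep : Separates X EL ER)
    (f : Sym2 V → C) (A : Tuple9 V) :
    CL X (EL ∪ ER) f A =
      {p : C × C | ∃ AL ∈ SX X, ∃ AR ∈ SX XR, combine w AL AR = A ∧
        p ∈ CL X EL f AL ∩ CL XR ER f AR} := by
  have combine_eq (c₁ c₂ : C) :
      combine w (neighbourTuple X EL f c₁ c₂) (neighbourTuple XR ER f c₁ c₂) =
        neighbourTuple X (EL ∪ ER) f c₁ c₂ := by
    rw [← combine_delete_right hw neighbourTuple_mem_SX, neighbourTuple_delete,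
      neighbourTuple_congr hXR, hsep.combine_neighbourTuple hw]
  ext p
  simp only [Set.mem_ofPred_eq, Set.mem_inter_iff, mem_CL_iff_eq_neighbourTuple]
  constructor
  · rintro rfl
    exact ⟨_, neighbourTuple_mem_SX, _, neighbourTuple_mem_SX, combine_eq _ _, rfl, rfl⟩
  · rintro ⟨_, -, _, -, rfl, rfl, rfl⟩
    exact combine_eq _ _

theorem CL_recursion
    [Fintype V] [Fintype C] (G : SimpleGraph V)
    (Xi XL XR : Set V) (v' v'' : V)
    (hXL : XL = Xi)
    (hv' : Xi \ XR = {v'}) (hv'' : XR \ Xi = {v''})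
    (EL ER : Set (Sym2 V)) (hELG : EL ⊆ G.edgeSet) (hERG : ER ⊆ G.edgeSet)
    (hdisj : Disjoint EL ER)
    (hERv : ∀ e ∈ ER, v' ∉ e)
    (hELv : ∀ e ∈ EL, v'' ∉ e)
    (hshare : ∀ v : V, (∃ e ∈ EL, v ∈ e) → (∃ e ∈ ER, v ∈ e) → v ∈ Xi \ {v'})
    (f : Sym2 V → C)
    (A : Tuple9 V) (hA : A ∈ SX Xi) :
    CL Xi (EL ∪ ER) f A =
      {p : C × C | ∃ AL ∈ SX XL, ∃ AR ∈ SX XR, combine v'' AL AR = A ∧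
        p ∈ CL XL EL f AL ∩ CL XR ER f AR} := by
  subst hXL
  have hw : v'' ∈ XR \ XL := hv'' ▸ Set.mem_singleton v''
  exact CL_recursion_general hw.2
    (fun e he v hv => mem_sdiff_singleton_iff_mem hv' hv'' (ne_of_mem_of_not_mem hv (hERv e he)))
    (fun v hL hR => (hshare v hL hR).1) f A
end

section
/- In the split setup, suppose f : E_i' → C is a valid partial coloring (a star edge coloring of (V, E_i')). Then for every pair (c₁,c₂) ∈ C×C: A_L^(1) ∩ A_R^(2) = ∅ and A_L^(2) ∩ A_R^(1) = ∅. -/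
variable {V C : Type*}

/-- A partial coloring (of the edges in `Es`) is proper if no two distinct edges of `Es`
sharing a vertex receive the same color. -/
def IsProper (Es : Set (Sym2 V)) (f : Sym2 V → C) : Prop :=
  ∀ e₁ ∈ Es, ∀ e₂ ∈ Es, e₁ ≠ e₂ → (∃ v, v ∈ e₁ ∧ v ∈ e₂) → f e₁ ≠ f e₂

/-- A partial coloring is valid (a star edge coloring of `(V, Es)`) if it is proper and no
path or cycle formed by four edges of `Es` is colored with only two colors.  A path or
cycle of length four consists of vertices `v₀, v₁, v₂, v₃, v₄` with consecutive edges in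
`Es`, all distinct except that possibly `v₀ = v₄` (the cycle case). -/
def IsValid (Es : Set (Sym2 V)) (f : Sym2 V → C) : Prop :=
  IsProper Es f ∧
  ∀ v₀ v₁ v₂ v₃ v₄ : V,
    s(v₀, v₁) ∈ Es → s(v₁, v₂) ∈ Es → s(v₂, v₃) ∈ Es → s(v₃, v₄) ∈ Es →
    ([v₀, v₁, v₂, v₃] : List V).Nodup → ([v₁, v₂, v₃, v₄] : List V).Nodup →
    ¬ ∃ c₁ c₂ : C,
      (f s(v₀, v₁) = c₁ ∨ f s(v₀, v₁) = c₂) ∧ (f s(v₁, v₂) = c₁ ∨ f s(v₁, v₂) = c₂) ∧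
      (f s(v₂, v₃) = c₁ ∨ f s(v₂, v₃) = c₂) ∧ (f s(v₃, v₄) = c₁ ∨ f s(v₃, v₄) = c₂)

/-!
Suppose `v₀` lies in both neighbour sets. If `c₁ = c₂`, an edge of `EL` and an edge of `ER` at `v₀`
have the same color, against properness. Otherwise the two walks leaving `v₀` join to a walk of
four edges whose colors alternate between `c₁` and `c₂`. In a properly colored loopless graph, an
alternating walk of three edges has distinct vertices; applied to the first three and to the last
three edges, this shows that the walk is a path or a cycle, which validity forbids.
-/

section StarEdgeColoring

variable {X Y : Set V} {Es EL ER : Set (Sym2 V)} {f : Sym2 V → C} {c₁ c₂ : C}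

theorem N1_mono (h : EL ⊆ Es) : N1 X EL f c₁ c₂ ⊆ N1 X Es f c₁ c₂ :=
  fun _ ⟨hX, v₁, v₂, h₀₁, h₁₂, hcolors⟩ => ⟨hX, v₁, v₂, h h₀₁, h h₁₂, hcolors⟩

theorem N2_eq_N1_swap : N2 X Es f c₁ c₂ = N1 X Es f c₂ c₁ := rfl

theorem IsProper.eq_of_color_eq (hf : IsProper Es f) {u v w : V} (hu : s(v, u) ∈ Es)
    (hw : s(v, w) ∈ Es) (hcolor : f s(v, u) = f s(v, w)) : u = w := by
  by_contra hne
  exact hf _ hu _ hw (mt Sym2.congr_right.mp hne)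
    ⟨v, Sym2.mem_mk_left v u, Sym2.mem_mk_left v w⟩ hcolor

theorem IsProper.nodup_of_alternating (hf : IsProper Es f) (hloop : ∀ e ∈ Es, ¬ e.IsDiag)
    {v₀ v₁ v₂ v₃ : V} (h₀₁ : s(v₀, v₁) ∈ Es) (h₁₂ : s(v₁, v₂) ∈ Es) (h₂₃ : s(v₂, v₃) ∈ Es)
    (hcolor : f s(v₀, v₁) = f s(v₂, v₃)) (hne : f s(v₀, v₁) ≠ f s(v₁, v₂)) :
    [v₀, v₁, v₂, v₃].Nodup := by
  have ne₀₁ : v₀ ≠ v₁ := hloop _ h₀₁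
  have ne₁₂ : v₁ ≠ v₂ := hloop _ h₁₂
  have ne₂₃ : v₂ ≠ v₃ := hloop _ h₂₃
  have ne₀₂ : v₀ ≠ v₂ := by
    rintro rfl
    exact hne (congrArg f Sym2.eq_swap)
  have ne₁₃ : v₁ ≠ v₃ := by
    rintro rfl
    exact hne (hcolor.trans (congrArg f Sym2.eq_swap))
  have ne₀₃ : v₀ ≠ v₃ := by
    rintro rfl
    rw [Sym2.eq_swap (a := v₂)] at h₂₃ hcolor
    exact ne₁₂ (hf.eq_of_color_eq h₀₁ h₂₃ hcolor)
  simp [*]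

theorem IsValid.not_alternating (hf : IsValid Es f) (hloop : ∀ e ∈ Es, ¬ e.IsDiag)
    {v₀ v₁ v₂ v₃ v₄ : V} (h₀₁ : s(v₀, v₁) ∈ Es) (h₁₂ : s(v₁, v₂) ∈ Es) (h₂₃ : s(v₂, v₃) ∈ Es)
    (h₃₄ : s(v₃, v₄) ∈ Es) (hne : f s(v₀, v₁) ≠ f s(v₁, v₂)) :
    ¬ (f s(v₀, v₁) = f s(v₂, v₃) ∧ f s(v₁, v₂) = f s(v₃, v₄)) := by
  rintro ⟨hodd, heven⟩
  have nodup_init : [v₀, v₁, v₂, v₃].Nodup :=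
    hf.1.nodup_of_alternating hloop h₀₁ h₁₂ h₂₃ hodd hne
  have nodup_tail : [v₁, v₂, v₃, v₄].Nodup :=
    hf.1.nodup_of_alternating hloop h₁₂ h₂₃ h₃₄ heven (hodd ▸ hne.symm)
  exact hf.2 v₀ v₁ v₂ v₃ v₄ h₀₁ h₁₂ h₂₃ h₃₄ nodup_init nodup_tail
    ⟨_, _, .inl rfl, .inr rfl, .inl hodd.symm, .inr heven.symm⟩

theorem IsValid.disjoint_N1_swap (hf : IsValid Es f) (hloop : ∀ e ∈ Es, ¬ e.IsDiag)
    (hc : c₁ ≠ c₂) : Disjoint (N1 X Es f c₁ c₂) (N1 Y Es f c₂ c₁) := by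
  rw [Set.disjoint_left]
  rintro v ⟨-, u₁, u₂, hu₁, hu₂, rfl, rfl⟩ ⟨-, w₁, w₂, hw₁, hw₂, hcolor₁, hcolor₂⟩
  rw [Sym2.eq_swap (a := v) (b := u₁)] at hu₁ hc hcolor₂
  rw [Sym2.eq_swap (a := u₁) (b := u₂)] at hu₂ hc hcolor₁
  exact hf.not_alternating hloop hu₂ hu₁ hw₁ hw₂ hc.symm ⟨hcolor₁.symm, hcolor₂.symm⟩

theorem IsProper.disjoint_N1_of_disjoint (hf : IsProper (EL ∪ ER) f) (hdisj : Disjoint EL ER)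
    {c b₁ b₂ : C} : Disjoint (N1 X EL f c b₁) (N1 Y ER f c b₂) := by
  rw [Set.disjoint_left]
  rintro v ⟨-, u, -, hu, -, hcolor_u, -⟩ ⟨-, w, -, hw, -, hcolor_w, -⟩
  obtain rfl : u = w := hf.eq_of_color_eq (.inl hu) (.inr hw) (hcolor_u.trans hcolor_w.symm)
  exact hdisj.notMem_of_mem_left hu hw

theorem IsValid.disjoint_N1_swap_of_disjoint (hf : IsValid (EL ∪ ER) f)
    (hloop : ∀ e ∈ EL ∪ ER, ¬ e.IsDiag) (hdisj : Disjoint EL ER) (c₁ c₂ : C) :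
    Disjoint (N1 X EL f c₁ c₂) (N1 Y ER f c₂ c₁) := by
  obtain rfl | hc := eq_or_ne c₁ c₂
  · exact hf.1.disjoint_N1_of_disjoint hdisj
  · exact (hf.disjoint_N1_swap hloop hc).mono (N1_mono Set.subset_union_left)
      (N1_mono Set.subset_union_right)

end StarEdgeColoring

theorem valid_condition_i_general (XL XR : Set V) (EL ER : Set (Sym2 V))
    (hloop : ∀ e ∈ EL ∪ ER, ¬ e.IsDiag) (hdisj : Disjoint EL ER)
    (f : Sym2 V → C) (hf : IsValid (EL ∪ ER) f) (c₁ c₂ : C) :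
    N1 XL EL f c₁ c₂ ∩ N2 XR ER f c₁ c₂ = ∅ ∧
    N2 XL EL f c₁ c₂ ∩ N1 XR ER f c₁ c₂ = ∅ := by
  simp only [N2_eq_N1_swap, ← Set.disjoint_iff_inter_eq_empty]
  exact ⟨hf.disjoint_N1_swap_of_disjoint hloop hdisj c₁ c₂,
    hf.disjoint_N1_swap_of_disjoint hloop hdisj c₂ c₁⟩

theorem valid_condition_i
    [Fintype V] [Fintype C] (G : SimpleGraph V)
    (Xi XL XR : Set V) (v' v'' : V)
    (hXL : XL = Xi)
    (hv' : Xi \ XR = {v'}) (hv'' : XR \ Xi = {v''})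
    (EL ER : Set (Sym2 V)) (hELG : EL ⊆ G.edgeSet) (hERG : ER ⊆ G.edgeSet)
    (hdisj : Disjoint EL ER)
    (hERv : ∀ e ∈ ER, v' ∉ e)
    (hELv : ∀ e ∈ EL, v'' ∉ e)
    (hshare : ∀ v : V, (∃ e ∈ EL, v ∈ e) → (∃ e ∈ ER, v ∈ e) → v ∈ Xi \ {v'})
    (f : Sym2 V → C) (hf : IsValid (EL ∪ ER) f) (c₁ c₂ : C) :
    N1 XL EL f c₁ c₂ ∩ N2 XR ER f c₁ c₂ = ∅ ∧
    N2 XL EL f c₁ c₂ ∩ N1 XR ER f c₁ c₂ = ∅ := by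
  exact valid_condition_i_general XL XR EL ER
    (fun _ he => G.not_isDiag_of_mem_edgeSet (Set.union_subset hELG hERG he)) hdisj f hf c₁ c₂
end

section
/- In the split setup, suppose f : E_i' → C is a valid partial coloring (a star edge coloring of (V, E_i')). Then for every pair (c₁,c₂) ∈ C×C: if (v₀,v₁) ∈ A_L^(8) and (v₁,v₂) ∈ A_R^(9), then v₀ ∉ A_R^(7) or v₂ ∉ A_L^(6); and if (v₀,v₁) ∈ A_R^(8) and (v₁,v₂) ∈ A_L^(9), then v₀ ∉ A_L^(7) or v₂ ∉ A_R^(6). -/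
variable {V C : Type*}

theorem IsProper.right_eq_of_color_eq {Es : Set (Sym2 V)} {f : Sym2 V → C} (hf : IsProper Es f)
    {a b c : V} (hab : s(a, b) ∈ Es) (hac : s(a, c) ∈ Es) (hcol : f s(a, b) = f s(a, c)) :
    b = c := by
  by_contra hbc
  exact hf _ hab _ hac (fun h => hbc (Sym2.congr_right.mp h))
    ⟨a, Sym2.mem_mk_left a b, Sym2.mem_mk_left a c⟩ hcol

/- If `b ≠ d`, properness and looplessness make the walk a path or a cycle: `a = c` or `c = e` would
give `b = d`, while `a = d` gives `b = c` and `b = e` gives `c = d`. -/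
theorem IsValid.eq_of_alternating_walk {G : SimpleGraph V} {Es : Set (Sym2 V)} {f : Sym2 V → C}
    (hf : IsValid Es f) (hEs : Es ⊆ G.edgeSet) {a b c d e : V}
    (hab : s(a, b) ∈ Es) (hbc : s(b, c) ∈ Es) (hcd : s(c, d) ∈ Es) (hde : s(d, e) ∈ Es)
    (hodd : f s(a, b) = f s(c, d)) (heven : f s(b, c) = f s(d, e)) : b = d := by
  by_contra hbd
  have ne_of_mem {x y : V} (h : s(x, y) ∈ Es) : x ≠ y := G.ne_of_adj (hEs h)
  have hac : a ≠ c := by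
    rintro rfl
    exact hbd (hf.1.right_eq_of_color_eq hab hcd hodd)
  have had : a ≠ d := by
    rintro rfl
    rw [Sym2.eq_swap (a := c)] at hcd hodd
    exact ne_of_mem hbc (hf.1.right_eq_of_color_eq hab hcd hodd)
  have hbe : b ≠ e := by
    rintro rfl
    rw [Sym2.eq_swap (a := d)] at hde heven
    exact ne_of_mem hcd (hf.1.right_eq_of_color_eq hbc hde heven)
  have hce : c ≠ e := by
    rintro rfl
    rw [Sym2.eq_swap (a := b)] at hbc heven
    rw [Sym2.eq_swap (a := d)] at hde heven
    exact hbd (hf.1.right_eq_of_color_eq hbc hde heven)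
  have hfirst : [a, b, c, d].Nodup := by
    simp [ne_of_mem hab, hac, had, ne_of_mem hbc, hbd, ne_of_mem hcd]
  have hlast : [b, c, d, e].Nodup := by
    simp [ne_of_mem hbc, hbd, hbe, ne_of_mem hcd, hce, ne_of_mem hde]
  exact hf.2 a b c d e hab hbc hcd hde hfirst hlast
    ⟨f s(a, b), f s(b, c), .inl rfl, .inr rfl, .inl hodd.symm, .inr heven.symm⟩

theorem IsValid.notMem_N7_or_notMem_N6 {G : SimpleGraph V} {E₁ E₂ : Set (Sym2 V)}
    {f : Sym2 V → C} (hf : IsValid (E₁ ∪ E₂) f) (hG : E₁ ∪ E₂ ⊆ G.edgeSet)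
    (hdisj : Disjoint E₁ E₂) {X₁ X₂ : Set V} {c₁ c₂ : C} {v₀ v₁ v₂ : V}
    (h₈ : (v₀, v₁) ∈ N8 X₁ E₁ f c₁ c₂) (h₉ : (v₁, v₂) ∈ N9 X₂ E₂ f c₁ c₂) :
    v₀ ∉ N7 X₂ E₂ f c₁ c₂ ∨ v₂ ∉ N6 X₁ E₁ f c₁ c₂ := by
  by_contra! ⟨⟨_, w, hw, hw_col⟩, ⟨_, u, hu, hu_col⟩⟩
  obtain ⟨_, _, h₀₁, h₀₁_col⟩ := h₈
  obtain ⟨_, _, h₁₂, h₁₂_col⟩ := h₉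
  rw [Sym2.eq_swap] at hw hw_col
  have hv : v₀ = v₂ := hf.eq_of_alternating_walk hG (.inr hw) (.inl h₀₁) (.inr h₁₂) (.inl hu)
    (hw_col.trans h₁₂_col.symm) (h₀₁_col.trans hu_col.symm)
  rw [← hv, Sym2.eq_swap] at h₁₂
  exact Set.disjoint_left.mp hdisj h₀₁ h₁₂

theorem valid_condition_ii_general (G : SimpleGraph V) (XL XR : Set V) (EL ER : Set (Sym2 V))
    (hELG : EL ⊆ G.edgeSet) (hERG : ER ⊆ G.edgeSet) (hdisj : Disjoint EL ER)
    (f : Sym2 V → C) (hf : IsValid (EL ∪ ER) f) (c₁ c₂ : C) :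
    (∀ v₀ v₁ v₂ : V, (v₀, v₁) ∈ N8 XL EL f c₁ c₂ → (v₁, v₂) ∈ N9 XR ER f c₁ c₂ →
      v₀ ∉ N7 XR ER f c₁ c₂ ∨ v₂ ∉ N6 XL EL f c₁ c₂) ∧
    (∀ v₀ v₁ v₂ : V, (v₀, v₁) ∈ N8 XR ER f c₁ c₂ → (v₁, v₂) ∈ N9 XL EL f c₁ c₂ →
      v₀ ∉ N7 XL EL f c₁ c₂ ∨ v₂ ∉ N6 XR ER f c₁ c₂) := by
  have hG : EL ∪ ER ⊆ G.edgeSet := Set.union_subset hELG hERG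
  refine ⟨fun _ _ _ => hf.notMem_N7_or_notMem_N6 hG hdisj, fun _ _ _ => ?_⟩
  rw [Set.union_comm] at hf hG
  exact hf.notMem_N7_or_notMem_N6 hG hdisj.symm

theorem valid_condition_ii
    [Fintype V] [Fintype C] (G : SimpleGraph V)
    (Xi XL XR : Set V) (v' v'' : V)
    (hXL : XL = Xi)
    (hv' : Xi \ XR = {v'}) (hv'' : XR \ Xi = {v''})
    (EL ER : Set (Sym2 V)) (hELG : EL ⊆ G.edgeSet) (hERG : ER ⊆ G.edgeSet)
    (hdisj : Disjoint EL ER)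
    (hERv : ∀ e ∈ ER, v' ∉ e)
    (hELv : ∀ e ∈ EL, v'' ∉ e)
    (hshare : ∀ v : V, (∃ e ∈ EL, v ∈ e) → (∃ e ∈ ER, v ∈ e) → v ∈ Xi \ {v'})
    (f : Sym2 V → C) (hf : IsValid (EL ∪ ER) f) (c₁ c₂ : C) :
    (∀ v₀ v₁ v₂ : V, (v₀, v₁) ∈ N8 XL EL f c₁ c₂ → (v₁, v₂) ∈ N9 XR ER f c₁ c₂ →
      v₀ ∉ N7 XR ER f c₁ c₂ ∨ v₂ ∉ N6 XL EL f c₁ c₂) ∧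
    (∀ v₀ v₁ v₂ : V, (v₀, v₁) ∈ N8 XR ER f c₁ c₂ → (v₁, v₂) ∈ N9 XL EL f c₁ c₂ →
      v₀ ∉ N7 XL EL f c₁ c₂ ∨ v₂ ∉ N6 XR ER f c₁ c₂) :=
  valid_condition_ii_general G XL XR EL ER hELG hERG hdisj f hf c₁ c₂
end

section
/- In the split setup, suppose g_L : E_L' → C and g_R : E_R' → C are valid partial colorings (star edge colorings of (V,E_L') and (V,E_R') respectively), and define f' : E_i' → C by f'(e) = g_L(e) for e ∈ E_L' and f'(e) = g_R(e) for e ∈ E_R'. Suppose that for every pair (c₁,c₂) ∈ C×C, the neighbour sets A_L^(j) = N^(j)_{g_L}(c₁,c₂) (with respect to X_L) and A_R^(j) = N^(j)_{g_R}(c₁,c₂) (with respect to X_R) satisfy all of the following: (i) A_L^(1) ∩ A_R^(2) = ∅ and A_L^(2) ∩ A_R^(1) = ∅; (ii) if (v₀,v₁) ∈ A_L^(8) and (v₁,v₂) ∈ A_R^(9), then v₀ ∉ A_R^(7) or v₂ ∉ A_L^(6), and if (v₀,v₁) ∈ A_R^(8) and (v₁,v₂) ∈ A_L^(9), then v₀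 ∉ A_L^(7) or v₂ ∉ A_R^(6); (iii) if (v₁,v₂) ∈ A_L^(3), then v₁ ∉ A_R^(7) or v₂ ∉ A_R^(6), and if (v₁,v₂) ∈ A_R^(3), then v₁ ∉ A_L^(7) or v₂ ∉ A_L^(6); (iv) A_L^(4) ∩ A_R^(7) = ∅ and A_R^(4) ∩ A_L^(7) = ∅; (v) if (v₁,v₂) ∈ A_L^(8), then v₁ ∉ A_R^(2) or v₂ ∉ A_R^(7), and if (v₁,v₂) ∈ A_R^(8), then v₁ ∉ A_L^(2) or v₂ ∉ A_L^(7); (vi) A_L^(6) ∩ A_R^(6) = ∅ and A_L^(7) ∩ A_R^(7) = ∅. Then f' is a valid partial coloring, i.e., a star edge coloring of (V, E_i'). -/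
variable {V C : Type*}

/-!
In a proper coloring a two-colored path or cycle of four edges has colors `a, b, a, b`. If such a
walk mixes edges of `E_L'` and `E_R'`, then every vertex where it changes side is shared, hence lies
in both `X_L` and `X_R`, and the neighbour sets record it: each of the conditions (i)–(v) rules out
one pattern of sides, up to reversing the walk and exchanging `L` with `R`. A walk staying on one
side is excluded by the validity of `g_L` or `g_R`, while (vi) makes the union proper.
-/

/-- `ColoredAdj Es f c u v` says that `uv` is an edge of `Es` of color `c`. All walk arguments are
phrased through it, so that an edge and its color travel together. -/
def ColoredAdj (Es : Set (Sym2 V)) (f : Sym2 V → C) (c : C) (u v : V) : Prop :=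
  s(u, v) ∈ Es ∧ f s(u, v) = c

/-- The vertices incident both to an edge of `E` and to an edge of `F`. -/
def sharedVertices (E F : Set (Sym2 V)) : Set V :=
  {v | (∃ e ∈ E, v ∈ e) ∧ ∃ e ∈ F, v ∈ e}

/-- Some walk of length four with colors `a, b, a, b` has its successive edges in the colored
relations `P₁, P₂, P₃, P₄`. Vertices may repeat and `a = b` is allowed. -/
def AlternatingWalk (P₁ P₂ P₃ P₄ : C → V → V → Prop) : Prop :=
  ∃ a b v₀ v₁ v₂ v₃ v₄, P₁ a v₀ v₁ ∧ P₂ b v₁ v₂ ∧ P₃ a v₂ v₃ ∧ P₄ b v₃ v₄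

/-- The five patterns of alternating walks switching between `P` and `Q` that conditions (i)–(v)
forbid, in this order. Up to reversal, these patterns and their images under exchanging `P` and `Q`
are all the mixed ones. -/
structure AvoidsMixedWalks (P Q : C → V → V → Prop) : Prop where
  not_PPQQ : ¬ AlternatingWalk P P Q Q
  not_QPQP : ¬ AlternatingWalk Q P Q P
  not_QPPQ : ¬ AlternatingWalk Q P P Q
  not_QPPP : ¬ AlternatingWalk Q P P P
  not_QQPQ : ¬ AlternatingWalk Q Q P Q

section Walks

variable {P Q P₁ P₂ P₃ P₄ : C → V → V → Prop}

theorem AlternatingWalk.reverse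
    (symm₁ : ∀ {c u v}, P₁ c u v → P₁ c v u) (symm₂ : ∀ {c u v}, P₂ c u v → P₂ c v u)
    (symm₃ : ∀ {c u v}, P₃ c u v → P₃ c v u) (symm₄ : ∀ {c u v}, P₄ c u v → P₄ c v u) :
    AlternatingWalk P₁ P₂ P₃ P₄ → AlternatingWalk P₄ P₃ P₂ P₁ := by
  rintro ⟨a, b, v₀, v₁, v₂, v₃, v₄, e₁, e₂, e₃, e₄⟩
  exact ⟨b, a, v₄, v₃, v₂, v₁, v₀, symm₄ e₄, symm₃ e₃, symm₂ e₂, symm₁ e₁⟩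

theorem AvoidsMixedWalks.left_of_first_left
    (hPQ : AvoidsMixedWalks P Q) (hQP : AvoidsMixedWalks Q P)
    (symmP : ∀ {c u v}, P c u v → P c v u) (symmQ : ∀ {c u v}, Q c u v → Q c v u)
    {a b : C} {v₀ v₁ v₂ v₃ v₄ : V} (e₁ : P a v₀ v₁) (e₂ : P b v₁ v₂ ∨ Q b v₁ v₂)
    (e₃ : P a v₂ v₃ ∨ Q a v₂ v₃) (e₄ : P b v₃ v₄ ∨ Q b v₃ v₄) :
    P b v₁ v₂ ∧ P a v₂ v₃ ∧ P b v₃ v₄ := by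
  have not_PPPQ : ¬ AlternatingWalk P P P Q :=
    mt (AlternatingWalk.reverse symmP symmP symmP symmQ) hPQ.not_QPPP
  have not_PQPP : ¬ AlternatingWalk P Q P P :=
    mt (AlternatingWalk.reverse symmP symmQ symmP symmP) hQP.not_QQPQ
  have walk {P₂ P₃ P₄ : C → V → V → Prop} (e₂ : P₂ b v₁ v₂) (e₃ : P₃ a v₂ v₃) (e₄ : P₄ b v₃ v₄) :
      AlternatingWalk P P₂ P₃ P₄ := ⟨a, b, v₀, v₁, v₂, v₃, v₄, e₁, e₂, e₃, e₄⟩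
  rcases e₂ with e₂ | e₂ <;> rcases e₃ with e₃ | e₃ <;> rcases e₄ with e₄ | e₄
  · exact ⟨e₂, e₃, e₄⟩
  · exact absurd (walk e₂ e₃ e₄) not_PPPQ
  · exact absurd (walk e₂ e₃ e₄) hQP.not_QQPQ
  · exact absurd (walk e₂ e₃ e₄) hPQ.not_PPQQ
  · exact absurd (walk e₂ e₃ e₄) not_PQPP
  · exact absurd (walk e₂ e₃ e₄) hQP.not_QPQP
  · exact absurd (walk e₂ e₃ e₄) hQP.not_QPPQ
  · exact absurd (walk e₂ e₃ e₄) hQP.not_QPPP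

end Walks

section ColoredAdj

variable {Es : Set (Sym2 V)} {f : Sym2 V → C}

theorem ColoredAdj.symm {c : C} {u v : V} (h : ColoredAdj Es f c u v) : ColoredAdj Es f c v u := by
  rwa [ColoredAdj, Sym2.eq_swap]

theorem isProper_iff_forall_coloredAdj :
    IsProper Es f ↔
      ∀ ⦃c u v w⦄, ColoredAdj Es f c v u → ColoredAdj Es f c v w → u = w := by
  constructor
  · intro hf c u v w hu hw
    by_contra hne
    exact hf _ hu.1 _ hw.1 (mt Sym2.congr_right.1 hne)
      ⟨v, Sym2.mem_mk_left v u, Sym2.mem_mk_left v w⟩ (hu.2.trans hw.2.symm)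
  · rintro hf e₁ he₁ e₂ he₂ hne ⟨v, hv₁, hv₂⟩ heq
    obtain ⟨u, rfl⟩ := Sym2.mem_iff_exists.1 hv₁
    obtain ⟨w, rfl⟩ := Sym2.mem_iff_exists.1 hv₂
    exact hne (Sym2.congr_right.2 (hf ⟨he₁, heq⟩ ⟨he₂, rfl⟩))

theorem IsProper.color_ne_color (hf : IsProper Es f) {u v w : V} (hu : s(u, v) ∈ Es)
    (hw : s(v, w) ∈ Es) (hne : u ≠ w) : f s(u, v) ≠ f s(v, w) := fun heq =>
  hne (isProper_iff_forall_coloredAdj.1 hf (ColoredAdj.symm ⟨hu, heq⟩) ⟨hw, rfl⟩)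

theorem isValid_iff_no_alternating_path :
    IsValid Es f ↔ IsProper Es f ∧ ∀ ⦃a b v₀ v₁ v₂ v₃ v₄⦄,
      ColoredAdj Es f a v₀ v₁ → ColoredAdj Es f b v₁ v₂ →
      ColoredAdj Es f a v₂ v₃ → ColoredAdj Es f b v₃ v₄ →
      [v₀, v₁, v₂, v₃].Nodup → ¬ [v₁, v₂, v₃, v₄].Nodup := by
  refine and_congr_right fun hproper => ⟨fun hf a b v₀ v₁ v₂ v₃ v₄ e₁ e₂ e₃ e₄ hn hn' => ?_,
    fun hf v₀ v₁ v₂ v₃ v₄ e₁ e₂ e₃ e₄ hn hn' => ?_⟩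
  · exact hf v₀ v₁ v₂ v₃ v₄ e₁.1 e₂.1 e₃.1 e₄.1 hn hn'
      ⟨a, b, .inl e₁.2, .inr e₂.2, .inl e₃.2, .inr e₄.2⟩
  · rintro ⟨c₁, c₂, k₁, k₂, k₃, k₄⟩
    have ne₁₂ := hproper.color_ne_color e₁ e₂ (by grind)
    have ne₂₃ := hproper.color_ne_color e₂ e₃ (by grind)
    have ne₃₄ := hproper.color_ne_color e₃ e₄ (by grind)
    have eq₁₃ : f s(v₂, v₃) = f s(v₀, v₁) := by grind
    have eq₂₄ : f s(v₃, v₄) = f s(v₁, v₂) := by grind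
    exact hf ⟨e₁, rfl⟩ ⟨e₂, rfl⟩ ⟨e₃, eq₁₃⟩ ⟨e₄, eq₂₄⟩ hn hn'

end ColoredAdj

section Split

variable {X Y : Set V} {E F : Set (Sym2 V)} {f g h : Sym2 V → C}

theorem sharedVertices_comm (E F : Set (Sym2 V)) : sharedVertices E F = sharedVertices F E :=
  Set.ext fun _ => and_comm

theorem ColoredAdj.mem_sharedVertices {a b : C} {u v w : V} (hE : ColoredAdj E g a v u)
    (hF : ColoredAdj F h b v w) : v ∈ sharedVertices E F :=
  ⟨⟨_, hE.1, Sym2.mem_mk_left v u⟩, ⟨_, hF.1, Sym2.mem_mk_left v w⟩⟩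

theorem ColoredAdj.of_union (hfg : Set.EqOn f g E) (hfh : Set.EqOn f h F) {c : C} {u v : V} :
    ColoredAdj (E ∪ F) f c u v → ColoredAdj E g c u v ∨ ColoredAdj F h c u v
  | ⟨.inl hE, hc⟩ => .inl ⟨hE, (hfg hE).symm.trans hc⟩
  | ⟨.inr hF, hc⟩ => .inr ⟨hF, (hfh hF).symm.trans hc⟩

theorem not_alternatingWalk_of_N1_inter_N2_eq_empty
    (hX : sharedVertices E F ⊆ X) (hY : sharedVertices E F ⊆ Y)
    (hN : ∀ c₁ c₂, N1 X E g c₁ c₂ ∩ N2 Y F h c₁ c₂ = ∅) :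
    ¬ AlternatingWalk (ColoredAdj E g) (ColoredAdj E g) (ColoredAdj F h) (ColoredAdj F h) := by
  rintro ⟨a, b, v₀, v₁, v₂, v₃, v₄, e₁, e₂, e₃, e₄⟩
  have hv₂ := e₂.symm.mem_sharedVertices e₃
  have hN1 : v₂ ∈ N1 X E g b a :=
    ⟨hX hv₂, v₁, v₀, e₂.symm.1, e₁.symm.1, e₂.symm.2, e₁.symm.2⟩
  have hN2 : v₂ ∈ N2 Y F h b a := ⟨hY hv₂, v₃, v₄, e₃.1, e₄.1, e₃.2, e₄.2⟩
  exact (hN b a).subset ⟨hN1, hN2⟩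

theorem not_alternatingWalk_of_N8_N9_imp_notMem_N7_or_N6
    (hX : sharedVertices E F ⊆ X) (hY : sharedVertices E F ⊆ Y)
    (hN : ∀ c₁ c₂, ∀ v₀ v₁ v₂ : V, (v₀, v₁) ∈ N8 X E g c₁ c₂ → (v₁, v₂) ∈ N9 Y F h c₁ c₂ →
      v₀ ∉ N7 Y F h c₁ c₂ ∨ v₂ ∉ N6 X E g c₁ c₂) :
    ¬ AlternatingWalk (ColoredAdj F h) (ColoredAdj E g) (ColoredAdj F h) (ColoredAdj E g) := by
  rintro ⟨a, b, v₀, v₁, v₂, v₃, v₄, e₁, e₂, e₃, e₄⟩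
  have hv₁ := e₂.mem_sharedVertices e₁.symm
  have hv₂ := e₂.symm.mem_sharedVertices e₃
  have hv₃ := e₄.mem_sharedVertices e₃.symm
  have hN8 : (v₁, v₂) ∈ N8 X E g b a := ⟨hX hv₁, hX hv₂, e₂⟩
  have hN9 : (v₂, v₃) ∈ N9 Y F h b a := ⟨hY hv₂, hY hv₃, e₃⟩
  have hN7 : v₁ ∈ N7 Y F h b a := ⟨hY hv₁, v₀, e₁.symm⟩
  have hN6 : v₃ ∈ N6 X E g b a := ⟨hX hv₃, v₄, e₄⟩
  exact (hN b a v₁ v₂ v₃ hN8 hN9).elim (· hN7) (· hN6)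

theorem not_alternatingWalk_of_N3_imp_notMem_N7_or_N6
    (hX : sharedVertices E F ⊆ X) (hY : sharedVertices E F ⊆ Y)
    (hN : ∀ c₁ c₂, ∀ v₁ v₂ : V, (v₁, v₂) ∈ N3 X E g c₁ c₂ →
      v₁ ∉ N7 Y F h c₁ c₂ ∨ v₂ ∉ N6 Y F h c₁ c₂) :
    ¬ AlternatingWalk (ColoredAdj F h) (ColoredAdj E g) (ColoredAdj E g) (ColoredAdj F h) := by
  rintro ⟨a, b, v₀, v₁, v₂, v₃, v₄, e₁, e₂, e₃, e₄⟩
  have hv₁ := e₂.mem_sharedVertices e₁.symm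
  have hv₃ := e₃.symm.mem_sharedVertices e₄
  have hN3 : (v₁, v₃) ∈ N3 X E g b a := ⟨hX hv₁, hX hv₃, v₂, e₂.1, e₃.1, e₂.2, e₃.2⟩
  have hN7 : v₁ ∈ N7 Y F h b a := ⟨hY hv₁, v₀, e₁.symm⟩
  have hN6 : v₃ ∈ N6 Y F h b a := ⟨hY hv₃, v₄, e₄⟩
  exact (hN b a v₁ v₃ hN3).elim (· hN7) (· hN6)

theorem not_alternatingWalk_of_N4_inter_N7_eq_empty
    (hX : sharedVertices E F ⊆ X) (hY : sharedVertices E F ⊆ Y)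
    (hN : ∀ c₁ c₂, N4 X E g c₁ c₂ ∩ N7 Y F h c₁ c₂ = ∅) :
    ¬ AlternatingWalk (ColoredAdj F h) (ColoredAdj E g) (ColoredAdj E g) (ColoredAdj E g) := by
  rintro ⟨a, b, v₀, v₁, v₂, v₃, v₄, e₁, e₂, e₃, e₄⟩
  have hv₁ := e₂.mem_sharedVertices e₁.symm
  have hN4 : v₁ ∈ N4 X E g b a :=
    ⟨hX hv₁, v₂, v₃, v₄, e₂.1, e₃.1, e₄.1, e₂.2, e₃.2, e₄.2⟩
  have hN7 : v₁ ∈ N7 Y F h b a := ⟨hY hv₁, v₀, e₁.symm⟩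
  exact (hN b a).subset ⟨hN4, hN7⟩

theorem not_alternatingWalk_of_N8_imp_notMem_N2_or_N7
    (hX : sharedVertices E F ⊆ X) (hY : sharedVertices E F ⊆ Y)
    (hN : ∀ c₁ c₂, ∀ v₁ v₂ : V, (v₁, v₂) ∈ N8 X E g c₁ c₂ →
      v₁ ∉ N2 Y F h c₁ c₂ ∨ v₂ ∉ N7 Y F h c₁ c₂) :
    ¬ AlternatingWalk (ColoredAdj F h) (ColoredAdj F h) (ColoredAdj E g) (ColoredAdj F h) := by
  rintro ⟨a, b, v₀, v₁, v₂, v₃, v₄, e₁, e₂, e₃, e₄⟩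
  have hv₂ := e₃.mem_sharedVertices e₂.symm
  have hv₃ := e₃.symm.mem_sharedVertices e₄
  have hN8 : (v₂, v₃) ∈ N8 X E g a b := ⟨hX hv₂, hX hv₃, e₃⟩
  have hN2 : v₂ ∈ N2 Y F h a b :=
    ⟨hY hv₂, v₁, v₀, e₂.symm.1, e₁.symm.1, e₂.symm.2, e₁.symm.2⟩
  have hN7 : v₃ ∈ N7 Y F h a b := ⟨hY hv₃, v₄, e₄⟩
  exact (hN a b v₂ v₃ hN8).elim (· hN2) (· hN7)

theorem isProper_union (hX : sharedVertices E F ⊆ X) (hY : sharedVertices E F ⊆ Y)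
    (hfg : Set.EqOn f g E) (hfh : Set.EqOn f h F) (hg : IsProper E g) (hh : IsProper F h)
    (hN : ∀ c₁ c₂, N6 X E g c₁ c₂ ∩ N6 Y F h c₁ c₂ = ∅) : IsProper (E ∪ F) f := by
  have not_both {c : C} {u v w : V} (hE : ColoredAdj E g c v u) (hF : ColoredAdj F h c v w) :
      False :=
    have hv := hE.mem_sharedVertices hF
    (hN c c).subset ⟨⟨hX hv, u, hE⟩, ⟨hY hv, w, hF⟩⟩
  rw [isProper_iff_forall_coloredAdj] at hg hh ⊢
  intro c u v w hu hw
  rcases hu.of_union hfg hfh with hu | hu <;> rcases hw.of_union hfg hfh with hw | hw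
  · exact hg hu hw
  · exact (not_both hu hw).elim
  · exact (not_both hw hu).elim
  · exact hh hu hw

theorem isValid_union_of_avoidsMixedWalks (hfg : Set.EqOn f g E) (hfh : Set.EqOn f h F)
    (hg : IsValid E g) (hh : IsValid F h) (hproper : IsProper (E ∪ F) f)
    (hEF : AvoidsMixedWalks (ColoredAdj E g) (ColoredAdj F h))
    (hFE : AvoidsMixedWalks (ColoredAdj F h) (ColoredAdj E g)) : IsValid (E ∪ F) f := by
  rw [isValid_iff_no_alternating_path] at hg hh ⊢
  refine ⟨hproper, fun a b v₀ v₁ v₂ v₃ v₄ e₁ e₂ e₃ e₄ => ?_⟩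
  have e₂' := e₂.of_union hfg hfh
  have e₃' := e₃.of_union hfg hfh
  have e₄' := e₄.of_union hfg hfh
  rcases e₁.of_union hfg hfh with e₁ | e₁
  · obtain ⟨e₂, e₃, e₄⟩ :=
      hEF.left_of_first_left hFE ColoredAdj.symm ColoredAdj.symm e₁ e₂' e₃' e₄'
    exact hg.2 e₁ e₂ e₃ e₄
  · obtain ⟨e₂, e₃, e₄⟩ :=
      hFE.left_of_first_left hEF ColoredAdj.symm ColoredAdj.symm e₁ e₂'.symm e₃'.symm e₄'.symm
    exact hh.2 e₁ e₂ e₃ e₄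

end Split

theorem combined_coloring_valid_general
    {XL XR : Set V} {EL ER : Set (Sym2 V)} {gL gR f' : Sym2 V → C}
    (hXL : sharedVertices EL ER ⊆ XL) (hXR : sharedVertices EL ER ⊆ XR)
    (hgL : IsValid EL gL) (hgR : IsValid ER gR)
    (hf'L : Set.EqOn f' gL EL) (hf'R : Set.EqOn f' gR ER)
    (hi : ∀ c₁ c₂ : C, N1 XL EL gL c₁ c₂ ∩ N2 XR ER gR c₁ c₂ = ∅ ∧
      N2 XL EL gL c₁ c₂ ∩ N1 XR ER gR c₁ c₂ = ∅)
    (hii : ∀ c₁ c₂ : C,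
      (∀ v₀ v₁ v₂ : V, (v₀, v₁) ∈ N8 XL EL gL c₁ c₂ → (v₁, v₂) ∈ N9 XR ER gR c₁ c₂ →
        v₀ ∉ N7 XR ER gR c₁ c₂ ∨ v₂ ∉ N6 XL EL gL c₁ c₂) ∧
      (∀ v₀ v₁ v₂ : V, (v₀, v₁) ∈ N8 XR ER gR c₁ c₂ → (v₁, v₂) ∈ N9 XL EL gL c₁ c₂ →
        v₀ ∉ N7 XL EL gL c₁ c₂ ∨ v₂ ∉ N6 XR ER gR c₁ c₂))
    (hiii : ∀ c₁ c₂ : C,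
      (∀ v₁ v₂ : V, (v₁, v₂) ∈ N3 XL EL gL c₁ c₂ →
        v₁ ∉ N7 XR ER gR c₁ c₂ ∨ v₂ ∉ N6 XR ER gR c₁ c₂) ∧
      (∀ v₁ v₂ : V, (v₁, v₂) ∈ N3 XR ER gR c₁ c₂ →
        v₁ ∉ N7 XL EL gL c₁ c₂ ∨ v₂ ∉ N6 XL EL gL c₁ c₂))
    (hiv : ∀ c₁ c₂ : C, N4 XL EL gL c₁ c₂ ∩ N7 XR ER gR c₁ c₂ = ∅ ∧
      N4 XR ER gR c₁ c₂ ∩ N7 XL EL gL c₁ c₂ = ∅)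
    (hv : ∀ c₁ c₂ : C,
      (∀ v₁ v₂ : V, (v₁, v₂) ∈ N8 XL EL gL c₁ c₂ →
        v₁ ∉ N2 XR ER gR c₁ c₂ ∨ v₂ ∉ N7 XR ER gR c₁ c₂) ∧
      (∀ v₁ v₂ : V, (v₁, v₂) ∈ N8 XR ER gR c₁ c₂ →
        v₁ ∉ N2 XL EL gL c₁ c₂ ∨ v₂ ∉ N7 XL EL gL c₁ c₂))
    (hvi : ∀ c₁ c₂ : C, N6 XL EL gL c₁ c₂ ∩ N6 XR ER gR c₁ c₂ = ∅) :
    IsValid (EL ∪ ER) f' := by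
  have hproper : IsProper (EL ∪ ER) f' := isProper_union hXL hXR hf'L hf'R hgL.1 hgR.1 hvi
  have hLR : AvoidsMixedWalks (ColoredAdj EL gL) (ColoredAdj ER gR) :=
    { not_PPQQ := not_alternatingWalk_of_N1_inter_N2_eq_empty hXL hXR fun a b => (hi a b).1
      not_QPQP := not_alternatingWalk_of_N8_N9_imp_notMem_N7_or_N6 hXL hXR fun a b => (hii a b).1
      not_QPPQ := not_alternatingWalk_of_N3_imp_notMem_N7_or_N6 hXL hXR fun a b => (hiii a b).1
      not_QPPP := not_alternatingWalk_of_N4_inter_N7_eq_empty hXL hXR fun a b => (hiv a b).1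
      not_QQPQ := not_alternatingWalk_of_N8_imp_notMem_N2_or_N7 hXL hXR fun a b => (hv a b).1 }
  rw [sharedVertices_comm] at hXL hXR
  have hRL : AvoidsMixedWalks (ColoredAdj ER gR) (ColoredAdj EL gL) :=
    { not_PPQQ := not_alternatingWalk_of_N1_inter_N2_eq_empty hXR hXL fun a b =>
        (Set.inter_comm _ _).trans (hi a b).2
      not_QPQP := not_alternatingWalk_of_N8_N9_imp_notMem_N7_or_N6 hXR hXL fun a b => (hii a b).2
      not_QPPQ := not_alternatingWalk_of_N3_imp_notMem_N7_or_N6 hXR hXL fun a b => (hiii a b).2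
      not_QPPP := not_alternatingWalk_of_N4_inter_N7_eq_empty hXR hXL fun a b => (hiv a b).2
      not_QQPQ := not_alternatingWalk_of_N8_imp_notMem_N2_or_N7 hXR hXL fun a b => (hv a b).2 }
  exact isValid_union_of_avoidsMixedWalks hf'L hf'R hgL hgR hproper hLR hRL

theorem combined_coloring_valid
    [Fintype V] [Fintype C] (G : SimpleGraph V)
    (Xi XL XR : Set V) (v' v'' : V)
    (hXL : XL = Xi)
    (hv' : Xi \ XR = {v'}) (hv'' : XR \ Xi = {v''})
    (EL ER : Set (Sym2 V)) (hELG : EL ⊆ G.edgeSet) (hERG : ER ⊆ G.edgeSet)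
    (hdisj : Disjoint EL ER)
    (hERv : ∀ e ∈ ER, v' ∉ e)
    (hELv : ∀ e ∈ EL, v'' ∉ e)
    (hshare : ∀ v : V, (∃ e ∈ EL, v ∈ e) → (∃ e ∈ ER, v ∈ e) → v ∈ Xi \ {v'})
    (gL gR f' : Sym2 V → C)
    (hgL : IsValid EL gL) (hgR : IsValid ER gR)
    (hf'L : ∀ e ∈ EL, f' e = gL e) (hf'R : ∀ e ∈ ER, f' e = gR e)
    (hi : ∀ c₁ c₂ : C, N1 XL EL gL c₁ c₂ ∩ N2 XR ER gR c₁ c₂ = ∅ ∧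
      N2 XL EL gL c₁ c₂ ∩ N1 XR ER gR c₁ c₂ = ∅)
    (hii : ∀ c₁ c₂ : C,
      (∀ v₀ v₁ v₂ : V, (v₀, v₁) ∈ N8 XL EL gL c₁ c₂ → (v₁, v₂) ∈ N9 XR ER gR c₁ c₂ →
        v₀ ∉ N7 XR ER gR c₁ c₂ ∨ v₂ ∉ N6 XL EL gL c₁ c₂) ∧
      (∀ v₀ v₁ v₂ : V, (v₀, v₁) ∈ N8 XR ER gR c₁ c₂ → (v₁, v₂) ∈ N9 XL EL gL c₁ c₂ →
        v₀ ∉ N7 XL EL gL c₁ c₂ ∨ v₂ ∉ N6 XR ER gR c₁ c₂))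
    (hiii : ∀ c₁ c₂ : C,
      (∀ v₁ v₂ : V, (v₁, v₂) ∈ N3 XL EL gL c₁ c₂ →
        v₁ ∉ N7 XR ER gR c₁ c₂ ∨ v₂ ∉ N6 XR ER gR c₁ c₂) ∧
      (∀ v₁ v₂ : V, (v₁, v₂) ∈ N3 XR ER gR c₁ c₂ →
        v₁ ∉ N7 XL EL gL c₁ c₂ ∨ v₂ ∉ N6 XL EL gL c₁ c₂))
    (hiv : ∀ c₁ c₂ : C, N4 XL EL gL c₁ c₂ ∩ N7 XR ER gR c₁ c₂ = ∅ ∧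
      N4 XR ER gR c₁ c₂ ∩ N7 XL EL gL c₁ c₂ = ∅)
    (hv : ∀ c₁ c₂ : C,
      (∀ v₁ v₂ : V, (v₁, v₂) ∈ N8 XL EL gL c₁ c₂ →
        v₁ ∉ N2 XR ER gR c₁ c₂ ∨ v₂ ∉ N7 XR ER gR c₁ c₂) ∧
      (∀ v₁ v₂ : V, (v₁, v₂) ∈ N8 XR ER gR c₁ c₂ →
        v₁ ∉ N2 XL EL gL c₁ c₂ ∨ v₂ ∉ N7 XL EL gL c₁ c₂))
    (hvi : ∀ c₁ c₂ : C, N6 XL EL gL c₁ c₂ ∩ N6 XR ER gR c₁ c₂ = ∅ ∧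
      N7 XL EL gL c₁ c₂ ∩ N7 XR ER gR c₁ c₂ = ∅) :
    IsValid (EL ∪ ER) f' := by
  have hshared : sharedVertices EL ER ⊆ XL \ {v'} := fun v hv => hXL ▸ hshare v hv.1 hv.2
  have hdiff : XL \ {v'} ⊆ XR := Set.sdiff_subset_comm.1 (hXL ▸ hv').subset
  exact combined_coloring_valid_general (hshared.trans Set.sdiff_subset) (hshared.trans hdiff)
    hgL hgR hf'L hf'R hi hii hiii hiv hv fun c₁ c₂ => (hvi c₁ c₂).1
end
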